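/- arXiv:2511.08099 — 2 statements merged into one kernel-verified Lean document; each statement's English description precedes it below -/
import Mathlib

section
/- Let k ∈ {7, 8, 10, 11, 12, 13} and let a ≥ 10864 be a positive integer with k·a² + 4 = r² a perfect square. Set b = ka, c = a + b − 2r and s = r − a, and assume a < c < b. Consider a solution of Type 1, i.e. (x₂, y₂) = (2, ±2) and (x₀, z₀) = (2, ±2). If Q_m = P_l for some integers l ≥ 1 and m ≥ 1, then m / log(e·m) < 1.336·10¹⁴ · (log(21.3·a))². -/
/-!
The sequences `P` and `Q` grow like powers of units `ε = exp x` and `α = exp y` of two distinct real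
quadratic fields, so `P l = Q m` makes the linear form `l x - m y + κ` smaller than
`exp (-(2 l - 1) x)`, where `κ` is the logarithm of a fixed element of the biquadratic field. Such a
form cannot be that small once `l` exceeds a multiple of `x ^ 2`, by Laurent's method of
interpolation determinants. Dirichlet's theorem provides `p`, `q` with `p x - q y` small; one
evaluates the functions `n ↦ (n choose k) * (ε ^ p * α ^ (-q)) ^ (ℓ n)`, `k < K`, `ℓ < L`, at
`K L` integers. Since `ε ^ l * α ^ (-m) * exp κ` is extremely close to `1`, dividing
`(ε ^ p * α ^ (-q)) ^ n` by its `(n p / l)`-th power hardly changes the value but keeps the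
exponents of `ε` and `α` bounded. A zero estimate makes the determinant nonzero for suitable
integers, the Schwarz lemma makes it tiny, and the product of its conjugates is, up to
denominators, a nonzero integer: these facts are incompatible for large `l`.
-/

open Finset Matrix Polynomial

/-! ### Determinants of entire functions -/

theorem exists_eq_sum_add_pow_mul_of_differentiable {f : ℂ → ℂ} (hf : Differentiable ℂ f) (N : ℕ) :
    ∃ (c : ℕ → ℂ) (R : ℂ → ℂ), Differentiable ℂ R ∧
      ∀ z, f z = ∑ d ∈ range N, c d * z ^ d + z ^ N * R z := by
  induction N with
  | zero => exact ⟨0, f, hf, by simp⟩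
  | succ N ih =>
    obtain ⟨c, R, hR, hc⟩ := ih
    refine ⟨Function.update c N (R 0), dslope R 0, ?_, fun z => ?_⟩
    · exact differentiableOn_univ.1 <|
        (Complex.differentiableOn_dslope Filter.univ_mem).2 hR.differentiableOn
    · have hslope : R z = R 0 + z * dslope R 0 z := by
        have := sub_smul_dslope R 0 z
        rw [sub_zero, smul_eq_mul] at this
        rw [this, add_sub_cancel]
      have hlow : ∑ d ∈ range N, Function.update c N (R 0) d * z ^ d = ∑ d ∈ range N, c d * z ^ d :=
        sum_congr rfl fun d hd => by rw [Function.update_of_ne (mem_range.1 hd).ne]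
      rw [sum_range_succ, hlow, Function.update_self, hc z, hslope]
      ring

theorem exists_exp_mul_eq_one_add_mul (μ : ℂ) :
    ∃ g : ℂ → ℂ, Differentiable ℂ g ∧ ∀ u, Complex.exp (μ * u) = 1 + u * g u := by
  obtain ⟨c, g, hg, hc⟩ :=
    exists_eq_sum_add_pow_mul_of_differentiable (f := fun u => Complex.exp (μ * u)) (by fun_prop) 1
  have hc0 : 1 = c 0 := by simpa using hc 0
  exact ⟨g, hg, fun u => by simpa [← hc0] using hc u⟩

theorem differentiable_det {n : Type*} [Fintype n] [DecidableEq n] {A : ℂ → Matrix n n ℂ}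
    (hA : ∀ i j, Differentiable ℂ fun w => A w i j) : Differentiable ℂ fun w => (A w).det := by
  simp only [det_apply]
  exact Differentiable.fun_sum fun σ _ =>
    (Differentiable.fun_finsetProd fun i _ => hA (σ i) i).const_smul _

theorem det_mul_diagonal_pow_mul_add_smul {R : Type*} [CommRing R] {N : ℕ}
    {V : Matrix (Fin N) (Fin N) R} (hV : IsUnit V.det) (C B : Matrix (Fin N) (Fin N) R) (w : R) :
    (V * (diagonal (fun d : Fin N => w ^ (d : ℕ)) * C) + w ^ N • B).det =
      w ^ (N * (N - 1) / 2) *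
        (V.det * (C + diagonal (fun d : Fin N => w ^ (N - d)) * (V⁻¹ * B)).det) := by
  have hdiag : diagonal (fun d : Fin N => w ^ (d : ℕ)) * diagonal (fun d : Fin N => w ^ (N - d)) =
      w ^ N • (1 : Matrix (Fin N) (Fin N) R) := by
    rw [diagonal_mul_diagonal, smul_one_eq_diagonal]
    congr! with d
    rw [← pow_add, Nat.add_sub_cancel' d.2.le]
  have hfactor : V * (diagonal (fun d : Fin N => w ^ (d : ℕ)) * C) + w ^ N • B =
      V * (diagonal (fun d : Fin N => w ^ (d : ℕ)) *
        (C + diagonal (fun d : Fin N => w ^ (N - d)) * (V⁻¹ * B))) := by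
    rw [mul_add (diagonal _), ← mul_assoc (diagonal _) (diagonal _), hdiag, smul_mul_assoc, one_mul,
      mul_add, Matrix.mul_smul, mul_nonsing_inv_cancel_left _ _ hV]
  have hdeg : ∑ d : Fin N, (d : ℕ) = N * (N - 1) / 2 := by
    rw [← sum_range fun d => d, sum_range_id]
  rw [hfactor, det_mul, det_mul, det_diagonal, prod_pow_eq_pow_sum, hdeg]
  ring

/- Taylor expansion writes the matrix as `V * diag (w ^ d) * C + w ^ N • B` with `V` the Vandermonde
matrix of the interpolation points. -/
theorem exists_det_eq_pow_mul {N : ℕ} {x : Fin N → ℂ} (hx : Function.Injective x)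
    {ψ : Fin N → ℂ → ℂ} (hψ : ∀ j, Differentiable ℂ (ψ j))
    {R : Fin N → Fin N → ℂ → ℂ} (hR : ∀ i j, Differentiable ℂ (R i j)) :
    ∃ H : ℂ → ℂ, Differentiable ℂ H ∧ ∀ w,
      (of fun i j => ψ j (w * x i) + w ^ N * R i j w).det = w ^ (N * (N - 1) / 2) * H w := by
  choose c T hT hc using fun j => exists_eq_sum_add_pow_mul_of_differentiable (hψ j) N
  let V := vandermonde x
  let C : Matrix (Fin N) (Fin N) ℂ := of fun d j => c j d
  let B : ℂ → Matrix (Fin N) (Fin N) ℂ := fun w =>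
    of fun i j => x i ^ N * T j (w * x i) + R i j w
  have hV : IsUnit V.det := isUnit_iff_ne_zero.2 (det_vandermonde_ne_zero_iff.2 hx)
  refine ⟨fun w => V.det * (C + diagonal (fun d : Fin N => w ^ (N - d)) * (V⁻¹ * B w)).det,
    (differentiable_det fun i j => ?_).const_mul _, fun w => ?_⟩
  · have hTx : ∀ i j, Differentiable ℂ fun w => T j (w * x i) := fun i j =>
      (hT j).comp (by fun_prop)
    simp only [Matrix.add_apply, diagonal_mul]
    simp only [mul_apply, B, of_apply]
    fun_prop
  · rw [← det_mul_diagonal_pow_mul_add_smul hV]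
    congr 1
    ext i j
    have hlow : ∑ d : Fin N, x i ^ (d : ℕ) * (w ^ (d : ℕ) * c j d) =
        ∑ d ∈ range N, c j d * (w * x i) ^ d := by
      rw [sum_range]
      exact sum_congr rfl fun d _ => by rw [mul_pow]; ring
    rw [Matrix.add_apply, mul_apply]
    simp only [diagonal_mul, of_apply, Matrix.smul_apply, smul_eq_mul, V, C, B, vandermonde_apply]
    rw [hlow, hc j (w * x i)]
    ring

theorem norm_mul_pow_le_of_eq_pow_mul {f H : ℂ → ℂ} (hH : Differentiable ℂ H) {T : ℕ}
    (hf : ∀ w, f w = w ^ T * H w) {E M : ℝ} (hE : 1 < E) (hM : ∀ w, ‖w‖ = E → ‖f w‖ ≤ M) :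
    ‖f 1‖ * E ^ T ≤ M := by
  have hE0 : 0 < E := one_pos.trans hE
  rw [← le_div_iff₀ (pow_pos hE0 T), hf 1, one_pow, one_mul]
  refine Complex.norm_le_of_forall_mem_frontier_norm_le (U := Metric.ball 0 E)
    Metric.isBounded_ball hH.diffContOnCl (fun w hw => ?_) (subset_closure (by simpa using hE))
  rw [frontier_ball _ hE0.ne', mem_sphere_zero_iff_norm] at hw
  rw [le_div_iff₀ (pow_pos hE0 T), ← hw, ← norm_pow, mul_comm, ← norm_mul, ← hf w]
  exact hM w hw

/- The factors `exp (μ i j)` are perturbations: along `w` they are deformed to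
`exp (μ i j * w ^ N)`, which does not lower the order of vanishing at `w = 0`. -/
theorem norm_det_mul_pow_le {ι : Type*} [Fintype ι] [DecidableEq ι]
    {x : ι → ℂ} (hx : Function.Injective x) {ψ : ι → ℂ → ℂ} (hψ : ∀ j, Differentiable ℂ (ψ j))
    (μ : ι → ι → ℂ) {E M : ℝ} (hE : 1 < E)
    (hM : ∀ w : ℂ, ‖w‖ = E → ∀ i j,
      ‖ψ j (w * x i) * Complex.exp (μ i j * w ^ Fintype.card ι)‖ ≤ M) :
    ‖(of fun i j => ψ j (x i) * Complex.exp (μ i j)).det‖ *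
        E ^ (Fintype.card ι * (Fintype.card ι - 1) / 2) ≤
      (Fintype.card ι).factorial * M ^ Fintype.card ι := by
  set N := Fintype.card ι
  let e : ι ≃ Fin N := Fintype.equivFin ι
  let A : ℂ → Matrix ι ι ℂ := fun w =>
    of fun i j => ψ j (w * x i) * Complex.exp (μ i j * w ^ N)
  choose g hg hexp using exists_exp_mul_eq_one_add_mul
  obtain ⟨H, hH, hdet⟩ := exists_det_eq_pow_mul (hx.comp e.symm.injective)
    (fun j => hψ (e.symm j))
    (R := fun i j w => ψ (e.symm j) (w * x (e.symm i)) * g (μ (e.symm i) (e.symm j)) (w ^ N))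
    fun i j => ((hψ _).comp (by fun_prop)).mul ((hg _).comp (by fun_prop))
  have hA : ∀ w, (A w).det = w ^ (N * (N - 1) / 2) * H w := fun w => by
    rw [← hdet, ← det_submatrix_equiv_self e.symm (A w)]
    congr 1
    ext i j
    simp only [A, submatrix_apply, of_apply, hexp, Function.comp_apply]
    ring
  have hcircle : ∀ w, ‖w‖ = E → ‖(A w).det‖ ≤ N.factorial * M ^ N := fun w hw => by
    rw [← nsmul_eq_mul]
    exact det_le (abv := NormedField.toAbsoluteValue ℂ) (hM w hw)
  have hbound := norm_mul_pow_le_of_eq_pow_mul hH hA hE hcircle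
  simpa [A] using hbound

/-! ### Zero estimate for exponential polynomials -/

section PolynomialMatrix

theorem coeff_prod_sum_of_natDegree_le {R ι : Type*} [CommSemiring R] (s : Finset ι)
    {p : ι → R[X]} {d : ι → ℕ} (h : ∀ i ∈ s, (p i).natDegree ≤ d i) :
    (∏ i ∈ s, p i).coeff (∑ i ∈ s, d i) = ∏ i ∈ s, (p i).coeff (d i) := by
  classical
  induction s using Finset.induction_on with
  | empty => simp
  | insert a s ha ih =>
    have hs : ∀ i ∈ s, (p i).natDegree ≤ d i := fun i hi => h i (mem_insert_of_mem hi)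
    rw [prod_insert ha, sum_insert ha, prod_insert ha, coeff_mul_add_eq_of_natDegree_le
      (h a (mem_insert_self a s)) ((natDegree_prod_le _ _).trans (sum_le_sum hs)), ih hs]

variable {R n : Type*} [CommRing R] [Fintype n] [DecidableEq n]

theorem natDegree_det_le_sum {A : Matrix n n R[X]} {d : n → ℕ}
    (hA : ∀ i j, (A i j).natDegree ≤ d j) : A.det.natDegree ≤ ∑ j, d j := by
  rw [det_apply]
  refine natDegree_sum_le_of_forall_le _ _ fun σ _ => (natDegree_smul_le _ _).trans ?_
  exact (natDegree_prod_le _ _).trans (sum_le_sum fun j _ => hA (σ j) j)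

theorem coeff_det_sum_of_natDegree_le {A : Matrix n n R[X]} {d : n → ℕ}
    (hA : ∀ i j, (A i j).natDegree ≤ d j) :
    A.det.coeff (∑ j, d j) = (of fun i j => (A i j).coeff (d j)).det := by
  simp only [det_apply, finsetSum_coeff, coeff_smul, of_apply]
  refine sum_congr rfl fun σ _ => ?_
  rw [coeff_prod_sum_of_natDegree_le _ fun j _ => hA (σ j) j]

end PolynomialMatrix

section Casorati

variable {R : Type*} [CommRing R] {n : ℕ} {u : Fin n → R} {F : Fin n → R[X]}

/-- The Casorati matrix of the exponential polynomials `x ↦ u a ^ x * F a x`: its row `g` is the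
shift by `g`, and the common factor `u a ^ x` of column `a` is removed so that the entries are
polynomials. -/
noncomputable def casorati (u : Fin n → R) (F : Fin n → R[X]) :
    Matrix (Fin n) (Fin n) R[X] :=
  of fun g a => C (u a ^ (g : ℕ)) * taylor ((g : ℕ) : R) (F a)

theorem natDegree_casorati_le (g a : Fin n) : (casorati u F g a).natDegree ≤ (F a).natDegree :=
  (natDegree_C_mul_le _ _).trans (natDegree_taylor _ _).le

theorem det_casorati_ne_zero [IsDomain R] (hu : Function.Injective u) (hF : ∀ a, F a ≠ 0) :
    (casorati u F).det ≠ 0 := by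
  have htop : (casorati u F).det.coeff (∑ a, (F a).natDegree) =
      (∏ a, (F a).leadingCoeff) * (vandermonde u).det := by
    rw [coeff_det_sum_of_natDegree_le natDegree_casorati_le, ← det_transpose (vandermonde u),
      ← det_mul_row]
    congr 1
    ext g a
    simp only [casorati, of_apply, coeff_C_mul, coeff_taylor_natDegree, transpose_apply,
      vandermonde_apply, mul_comm]
  intro hdet
  rw [hdet, coeff_zero] at htop
  refine mul_ne_zero (prod_ne_zero_iff.2 fun a _ => leadingCoeff_ne_zero.2 (hF a))
    (det_vandermonde_ne_zero_iff.2 hu) htop.symm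

theorem eval_det_casorati_eq_zero [IsDomain R] {c : Fin n → R} (hc : c ≠ 0) {x : R}
    (hx : ∀ g : Fin n, ∑ a, c a * u a ^ (g : ℕ) * (F a).eval (x + (g : ℕ)) = 0) :
    (casorati u F).det.eval x = 0 := by
  rw [← coe_evalRingHom, RingHom.map_det]
  refine exists_mulVec_eq_zero_iff.1 ⟨c, hc, funext fun g => ?_⟩
  simp only [mulVec, dotProduct, RingHom.mapMatrix_apply, map_apply, casorati, of_apply,
    coe_evalRingHom, eval_mul, eval_C, taylor_eval, Pi.zero_apply]
  rw [← hx g]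
  exact sum_congr rfl fun a _ => by ring

end Casorati

/- If some `F j` are nonzero, the determinant of their Casorati matrix is a nonzero polynomial of
degree less than `K * card κ` vanishing at every `x i`. -/
theorem forall_eq_zero_of_sum_mul_pow_mul_eval_eq_zero {R ι κ : Type*} [CommRing R] [IsDomain R]
    [Fintype ι] [Fintype κ] {K : ℕ} (hcard : K * Fintype.card κ ≤ Fintype.card ι)
    {x : ι → R} (hx : Function.Injective x) {u : κ → R} (hu : Function.Injective u)
    {c : ι → κ → R} (hc : ∀ i j, c i j ≠ 0) {F : κ → R[X]} (hF : ∀ j, (F j).natDegree < K)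
    (hzero : ∀ i, ∀ g < Fintype.card κ, ∑ j, c i j * u j ^ g * (F j).eval (x i + g) = 0) :
    ∀ j, F j = 0 := by
  classical
  by_contra! ⟨j₀, hj₀⟩
  let S := {j : κ // F j ≠ 0}
  let n := Fintype.card S
  let e : Fin n ≃ S := (Fintype.equivFin S).symm
  have hn : n ≤ Fintype.card κ := Fintype.card_subtype_le _
  have hn0 : 0 < n := Fintype.card_pos_iff.2 ⟨⟨j₀, hj₀⟩⟩
  let A := casorati (fun a => u (e a)) fun a => F (e a)
  have hdeg : A.det.natDegree < Fintype.card ι := calc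
    A.det.natDegree ≤ ∑ a, (F (e a)).natDegree := natDegree_det_le_sum natDegree_casorati_le
    _ < ∑ _a : Fin n, K := sum_lt_sum_of_nonempty ⟨⟨0, hn0⟩, mem_univ _⟩ fun a _ => hF _
    _ = K * n := by simp [mul_comm]
    _ ≤ Fintype.card ι := (Nat.mul_le_mul_left K hn).trans hcard
  have hsupport : ∀ i, ∀ g < Fintype.card κ,
      ∑ a, c i (e a) * u (e a) ^ g * (F (e a)).eval (x i + g) = 0 := fun i g hg => by
    rw [e.sum_comp fun j : S => c i j * u j ^ g * (F j).eval (x i + g), ← hzero i g hg]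
    rw [← sum_subtype (univ.filter fun j => F j ≠ 0) (by simp)
      fun j => c i j * u j ^ g * (F j).eval (x i + g)]
    refine sum_filter_of_ne fun j _ hj hFj => hj ?_
    rw [hFj, eval_zero, mul_zero]
  have heval : ∀ i, A.det.eval (x i) = 0 := fun i =>
    eval_det_casorati_eq_zero (c := fun a => c i (e a)) (fun h => hc i _ (congrFun h ⟨0, hn0⟩))
      fun g => hsupport i g (g.2.trans_le hn)
  exact det_casorati_ne_zero (hu.comp (Subtype.val_injective.comp e.injective)) (fun a => (e a).2)
    (eq_zero_of_natDegree_lt_card_of_eval_eq_zero A.det hx heval hdeg)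

theorem exists_det_submatrix_ne_zero {F m n : Type*} [Field F] [Finite m] [Fintype n]
    [DecidableEq n] {A : Matrix m n F} (hA : Function.Injective A.mulVec) :
    ∃ f : n → m, (A.submatrix f id).det ≠ 0 := by
  have := Fintype.ofFinite m
  obtain ⟨κ, rows, hrows, hspan, hindep⟩ := exists_linearIndependent' F A.row
  have : Finite κ := Finite.of_injective rows hrows
  have := Fintype.ofFinite κ
  have hcard : Fintype.card n = Fintype.card κ := by
    rw [← finrank_span_eq_card hindep, hspan, ← A.rank_eq_finrank_span_row, rank,
      LinearMap.finrank_range_of_inj (f := A.mulVecLin) hA, Module.finrank_fintype_fun_eq_card]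
  let e : n ≃ κ := Fintype.equivOfCardEq hcard
  refine ⟨rows ∘ e, ?_⟩
  have hli : LinearIndependent F (A.submatrix (rows ∘ e) id).row :=
    (linearIndependent_equiv e).2 hindep
  rwa [linearIndependent_rows_iff_isUnit, isUnit_iff_isUnit_det, isUnit_iff_ne_zero] at hli

section InterpolationMatrix

variable {F : Type*} [Field F] {K L : ℕ}

/-- The polynomial `∑ k, v k * (X choose k)` with prescribed coefficients in the binomial basis. -/
noncomputable def binomialPolynomial (v : Fin K → F) : F[X] :=
  ∑ k : Fin K, C (v k / (k : ℕ).factorial) * descPochhammer F k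

theorem eval_natCast_binomialPolynomial [CharZero F] (v : Fin K → F) (x : ℕ) :
    (binomialPolynomial v).eval (x : F) = ∑ k : Fin K, v k * (x.choose k : F) := by
  simp only [binomialPolynomial, eval_finsetSum, eval_mul, eval_C,
    descPochhammer_eval_eq_descFactorial, Nat.descFactorial_eq_factorial_mul_choose, Nat.cast_mul]
  refine sum_congr rfl fun k _ => ?_
  have : ((k : ℕ).factorial : F) ≠ 0 := Nat.cast_ne_zero.2 (Nat.factorial_ne_zero k)
  field_simp

theorem natDegree_binomialPolynomial_lt (hK : 0 < K) (v : Fin K → F) :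
    (binomialPolynomial v).natDegree < K := by
  refine (natDegree_sum_le_of_forall_le _ _ (n := K - 1) fun k _ => ?_).trans_lt
    (Nat.sub_one_lt hK.ne')
  refine (natDegree_C_mul_le _ _).trans ?_
  rw [descPochhammer_natDegree]
  exact Nat.le_sub_one_of_lt k.2

theorem eq_zero_of_binomialPolynomial_eq_zero [CharZero F] {v : Fin K → F}
    (hv : binomialPolynomial v = 0) : v = 0 := by
  suffices h : ∀ x (hx : x < K), v ⟨x, hx⟩ = 0 from funext fun k => h k k.2
  intro x
  induction x using Nat.strong_induction_on with
  | _ x ih =>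
    intro hx
    have heval := eval_natCast_binomialPolynomial v x
    rw [hv, eval_zero, sum_eq_single_of_mem ⟨x, hx⟩ (mem_univ _)] at heval
    · simpa using heval.symm
    · intro k _ hk
      rcases lt_or_gt_of_ne (Fin.val_ne_of_ne hk) with hlt | hgt
      · rw [ih k hlt k.2, zero_mul]
      · rw [Nat.choose_eq_zero_of_lt hgt, Nat.cast_zero, mul_zero]

/-- The matrix of values `(n i choose k) * ω i ^ ℓ` of the functions `x ↦ (x choose k) * w ^ ℓ` at
the points `(n i, ω i)`, with columns indexed by the pairs `(k, ℓ)`. -/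
def interpolationMatrix {ι R : Type*} [Semiring R] (K L : ℕ) (n : ι → ℕ) (ω : ι → R) :
    Matrix ι (Fin K × Fin L) R :=
  of fun i j => ((n i).choose j.1 : R) * ω i ^ (j.2 : ℕ)

variable [CharZero F] {ι : Type*} [Fintype ι] {n : ι → ℕ} {ω : ι → F} {θ : F}

theorem interpolationMatrix_mulVec_injective (hK : 0 < K) (hcard : K * L ≤ Fintype.card ι)
    (hn : Function.Injective n) (hω : ∀ i, ω i ≠ 0)
    (hθ : Function.Injective fun ℓ : Fin L => θ ^ (ℓ : ℕ)) :
    Function.Injective (interpolationMatrix K L (fun p : ι × Fin L => n p.1 + p.2)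
      fun p => ω p.1 * θ ^ (p.2 : ℕ)).mulVec := by
  refine (injective_iff_map_eq_zero (mulVecLin _)).2 fun v hv => ?_
  have hzero : ∀ ℓ, binomialPolynomial (fun k => v (k, ℓ)) = 0 := by
    refine forall_eq_zero_of_sum_mul_pow_mul_eval_eq_zero (K := K) (x := fun i => (n i : F))
      (c := fun i ℓ => ω i ^ (ℓ : ℕ)) (by simpa using hcard) (Nat.cast_injective.comp hn) hθ
      (fun i ℓ => pow_ne_zero _ (hω i)) (fun ℓ => natDegree_binomialPolynomial_lt hK _)
      fun i g hg => ?_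
    rw [Fintype.card_fin] at hg
    have hrow := congrFun hv (i, ⟨g, hg⟩)
    simp only [mulVecLin_apply, mulVec, dotProduct, interpolationMatrix, of_apply,
      Fintype.sum_prod_type_right, Pi.zero_apply] at hrow
    rw [← hrow]
    refine sum_congr rfl fun ℓ _ => ?_
    rw [← Nat.cast_add, eval_natCast_binomialPolynomial, mul_sum]
    exact sum_congr rfl fun k _ => by rw [mul_pow, ← pow_mul, ← pow_mul]; ring
  exact funext fun j => congrFun (eq_zero_of_binomialPolynomial_eq_zero (hzero j.2)) j.1

theorem exists_det_interpolationMatrix_ne_zero (hK : 0 < K) (hcard : K * L ≤ Fintype.card ι)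
    (hn : Function.Injective n) (hω : ∀ i, ω i ≠ 0)
    (hθ : Function.Injective fun ℓ : Fin L => θ ^ (ℓ : ℕ)) :
    ∃ f : Fin K × Fin L → ι × Fin L, (interpolationMatrix K L (fun i => n (f i).1 + (f i).2)
      fun i => ω (f i).1 * θ ^ ((f i).2 : ℕ)).det ≠ 0 :=
  exists_det_submatrix_ne_zero (interpolationMatrix_mulVec_injective hK hcard hn hω hθ)

end InterpolationMatrix

/-! ### Two independent quadratic units -/

section QuadraticEval

variable {R A : Type*} [CommRing R] [CommRing A] {a b : R}

/-- The ring homomorphism out of `R[ω]`, `ω² = a + b ω`, extending `f` and sending `ω` to a root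
`t` of the image polynomial. Unlike `QuadraticAlgebra.lift` it does not need `A` to be an
`R`-algebra, so several homomorphisms out of `R` can be extended side by side. -/
def quadraticEval (f : R →+* A) (t : A) (ht : t * t = f a + f b * t) :
    QuadraticAlgebra R a b →+* A where
  toFun z := f z.re + f z.im * t
  map_one' := by simp [QuadraticAlgebra.re_one, QuadraticAlgebra.im_one]
  map_zero' := by simp
  map_add' z w := by simp only [QuadraticAlgebra.re_add, QuadraticAlgebra.im_add, map_add]; ring
  map_mul' z w := by
    simp only [QuadraticAlgebra.re_mul, QuadraticAlgebra.im_mul, map_add, map_mul]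
    linear_combination -(f z.im * f w.im) * ht

theorem quadraticEval_apply (f : R →+* A) {t : A} (ht : t * t = f a + f b * t)
    (z : QuadraticAlgebra R a b) : quadraticEval f t ht z = f z.re + f z.im * t :=
  rfl

theorem quadraticEval_mul_quadraticEval_eq_norm (f : R →+* A) {t t' : A}
    (ht : t * t = f a + f b * t) (ht' : t' * t' = f a + f b * t') (hadd : t + t' = f b)
    (hmul : t * t' = -f a) (z : QuadraticAlgebra R a b) :
    quadraticEval f t ht z * quadraticEval f t' ht' z = f z.norm := by
  simp only [quadraticEval_apply, QuadraticAlgebra.norm_def, map_sub, map_add, map_mul]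
  linear_combination f z.re * f z.im * hadd + f z.im * f z.im * hmul

/-- The root `ω` of `T² - b T + 1` as a unit, with inverse the other root `b - ω`. -/
def quadraticUnit (b : R) : (QuadraticAlgebra R (-1) b)ˣ where
  val := ⟨0, 1⟩
  inv := ⟨b, -1⟩
  val_inv := by ext <;> simp [QuadraticAlgebra.re_one, QuadraticAlgebra.im_one]
  inv_val := by ext <;> simp [QuadraticAlgebra.re_one, QuadraticAlgebra.im_one]

end QuadraticEval

theorem eq_zero_of_add_mul_irrational_eq_zero {w : ℝ} (hw : Irrational w) {a b : ℤ}
    (h : a + b * w = 0) : a = 0 ∧ b = 0 := by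
  have hb : b = 0 := by
    by_contra hb
    exact ((hw.intCast_mul hb).intCast_add a).ne_zero h
  subst hb
  simpa using h

theorem eq_zero_of_add_mul_sqrt_eq_zero {w v : ℝ} {W V : ℤ} (hW : w ^ 2 = W) (hV : v ^ 2 = V)
    (hw : Irrational w) (hv : Irrational v) (hwv : Irrational (w * v)) {a b c : ℤ}
    (h : a + b * w + c * v = 0) : b = 0 ∧ c = 0 := by
  have hsq : ((b ^ 2 * W + c ^ 2 * V - a ^ 2 : ℤ) : ℝ) + (2 * b * c : ℤ) * (w * v) = 0 := by
    push_cast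
    linear_combination (b * w + c * v - a) * h - b ^ 2 * hW - c ^ 2 * hV
  have hbc : b = 0 ∨ c = 0 := by
    simpa using (eq_zero_of_add_mul_irrational_eq_zero hwv hsq).2
  rcases hbc with rfl | rfl
  · exact ⟨rfl, (eq_zero_of_add_mul_irrational_eq_zero hv (by simpa using h)).2⟩
  · exact ⟨(eq_zero_of_add_mul_irrational_eq_zero hw (by simpa using h)).2, rfl⟩

theorem eq_zero_of_biquadratic_relation {w v : ℝ} {W V : ℤ} (hW : w ^ 2 = W) (hV : v ^ 2 = V)
    (hw : Irrational w) (hv : Irrational v) (hwv : Irrational (w * v)) {a b c d : ℤ}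
    (h : a + b * w + c * v + d * (w * v) = 0) : a = 0 ∧ b = 0 ∧ c = 0 ∧ d = 0 := by
  have hthree : ((a * c - b * d * W : ℤ) : ℝ) + (b * c - a * d : ℤ) * w +
      (c ^ 2 - d ^ 2 * W : ℤ) * v = 0 := by
    push_cast
    linear_combination (c - d * w) * h + (b * d + d ^ 2 * v) * hW
  have hnorm := (eq_zero_of_add_mul_sqrt_eq_zero hW hV hw hv hwv hthree).2
  have hcd : (c : ℝ) ^ 2 = (d * w) ^ 2 := by
    rw [mul_pow, hW]
    exact_mod_cast sub_eq_zero.1 hnorm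
  have hcd0 : c = 0 ∧ d = 0 := by
    rcases sq_eq_sq_iff_eq_or_eq_neg.1 hcd with hc | hc
    · simpa using eq_zero_of_add_mul_irrational_eq_zero hw (a := c) (b := -d)
        (by push_cast; linear_combination hc)
    · exact eq_zero_of_add_mul_irrational_eq_zero hw (by linear_combination hc)
  obtain ⟨rfl, rfl⟩ := hcd0
  obtain ⟨ha, hb⟩ := eq_zero_of_add_mul_irrational_eq_zero hw (a := a) (b := b) (by simpa using h)
  exact ⟨ha, hb, rfl, rfl⟩

/-- `exp x` and `exp y` are units of norm one and traces `r`, `s` in two distinct real quadratic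
fields. The four pairs `(±x, ±y)` are the logarithms of the conjugates. -/
structure IsBiquadraticUnitPair (r s : ℤ) (x y : ℝ) : Prop where
  two_mul_cosh_left : 2 * Real.cosh x = r
  two_mul_cosh_right : 2 * Real.cosh y = s
  irrational_sinh_left : Irrational (Real.sinh x)
  irrational_sinh_right : Irrational (Real.sinh y)
  irrational_sinh_mul_sinh : Irrational (Real.sinh x * Real.sinh y)

/-- The order `ℤ[ε, α]` with `ε² = r ε - 1` and `α² = s α - 1`. -/
abbrev BiquadraticOrder (r s : ℤ) : Type :=
  QuadraticAlgebra (QuadraticAlgebra ℤ (-1) r) (-1) (s : QuadraticAlgebra ℤ (-1) r)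

namespace BiquadraticOrder

/-- The unit `ε` of `ℤ[ε, α]`. -/
def eps (r s : ℤ) : (BiquadraticOrder r s)ˣ :=
  Units.map (algebraMap (QuadraticAlgebra ℤ (-1) r) (BiquadraticOrder r s)).toMonoidHom
    (quadraticUnit r)

/-- The unit `α` of `ℤ[ε, α]`. -/
def alpha (r s : ℤ) : (BiquadraticOrder r s)ˣ :=
  quadraticUnit (s : QuadraticAlgebra ℤ (-1) r)

end BiquadraticOrder

theorem exp_mul_exp_eq_neg_one_add {x : ℝ} {r : ℤ} (h : 2 * Real.cosh x = r) :
    Real.exp x * Real.exp x = (-1 : ℤ) + (r : ℝ) * Real.exp x := by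
  rw [← h, Real.cosh_eq]
  have : Real.exp x * Real.exp (-x) = 1 := by rw [← Real.exp_add, add_neg_cancel, Real.exp_zero]
  push_cast
  linear_combination -this

namespace IsBiquadraticUnitPair

variable {r s : ℤ} {x y : ℝ}

theorem neg_left (h : IsBiquadraticUnitPair r s x y) : IsBiquadraticUnitPair r s (-x) y where
  two_mul_cosh_left := by rw [Real.cosh_neg, h.two_mul_cosh_left]
  two_mul_cosh_right := h.two_mul_cosh_right
  irrational_sinh_left := by rw [Real.sinh_neg]; exact h.irrational_sinh_left.neg
  irrational_sinh_right := h.irrational_sinh_right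
  irrational_sinh_mul_sinh := by
    rw [Real.sinh_neg, neg_mul]; exact h.irrational_sinh_mul_sinh.neg

theorem neg_right (h : IsBiquadraticUnitPair r s x y) : IsBiquadraticUnitPair r s x (-y) where
  two_mul_cosh_left := h.two_mul_cosh_left
  two_mul_cosh_right := by rw [Real.cosh_neg, h.two_mul_cosh_right]
  irrational_sinh_left := h.irrational_sinh_left
  irrational_sinh_right := by rw [Real.sinh_neg]; exact h.irrational_sinh_right.neg
  irrational_sinh_mul_sinh := by
    rw [Real.sinh_neg, mul_neg]; exact h.irrational_sinh_mul_sinh.neg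

/-- The embedding of `ℤ[ε]` into `ℝ` with `ε ↦ exp x`. -/
noncomputable def evalLeft (h : IsBiquadraticUnitPair r s x y) : QuadraticAlgebra ℤ (-1) r →+* ℝ :=
  quadraticEval (Int.castRingHom ℝ) (Real.exp x)
    (exp_mul_exp_eq_neg_one_add h.two_mul_cosh_left)

/-- The embedding of `ℤ[ε, α]` into `ℝ` with `ε ↦ exp x` and `α ↦ exp y`. -/
noncomputable def eval (h : IsBiquadraticUnitPair r s x y) : BiquadraticOrder r s →+* ℝ :=
  quadraticEval h.evalLeft (Real.exp y) <| by
    simpa using exp_mul_exp_eq_neg_one_add h.two_mul_cosh_right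

theorem eval_apply (h : IsBiquadraticUnitPair r s x y) (z : BiquadraticOrder r s) :
    h.eval z = (z.re.re + z.re.im * Real.exp x) + (z.im.re + z.im.im * Real.exp x) * Real.exp y :=
  rfl

theorem eval_eps (h : IsBiquadraticUnitPair r s x y) :
    h.eval (BiquadraticOrder.eps r s) = Real.exp x := by
  simp [eval_apply, BiquadraticOrder.eps, quadraticUnit]

theorem eval_alpha (h : IsBiquadraticUnitPair r s x y) :
    h.eval (BiquadraticOrder.alpha r s) = Real.exp y := by
  simp [eval_apply, BiquadraticOrder.alpha, quadraticUnit, QuadraticAlgebra.re_one,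
    QuadraticAlgebra.im_one]

theorem eval_zpow (h : IsBiquadraticUnitPair r s x y) {u : (BiquadraticOrder r s)ˣ} {t : ℝ}
    (hu : h.eval u = Real.exp t) (n : ℤ) : h.eval ↑(u ^ n) = Real.exp (n * t) := by
  have hmap : h.eval ↑(u ^ n) = h.eval u ^ n := by
    have := congrArg Units.val (map_zpow (Units.map h.eval.toMonoidHom) u n)
    rwa [Units.val_zpow_eq_zpow_val] at this
  rw [hmap, hu, mul_comm, Real.exp_mul, Real.rpow_intCast]

theorem eval_injective (h : IsBiquadraticUnitPair r s x y) : Function.Injective h.eval := by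
  refine (injective_iff_map_eq_zero _).2 fun z hz => ?_
  rw [eval_apply] at hz
  have hW : (2 * Real.sinh x) ^ 2 = ((r ^ 2 - 4 : ℤ) : ℝ) := by
    push_cast
    rw [← h.two_mul_cosh_left]
    linear_combination -4 * Real.cosh_sq_sub_sinh_sq x
  have hV : (2 * Real.sinh y) ^ 2 = ((s ^ 2 - 4 : ℤ) : ℝ) := by
    push_cast
    rw [← h.two_mul_cosh_right]
    linear_combination -4 * Real.cosh_sq_sub_sinh_sq y
  have hwv : Irrational (2 * Real.sinh x * (2 * Real.sinh y)) := by
    rw [mul_mul_mul_comm]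
    exact_mod_cast h.irrational_sinh_mul_sinh.natCast_mul (m := 4) (by norm_num)
  have hexp : ∀ t, Real.exp t = (2 * Real.cosh t + 2 * Real.sinh t) / 2 := fun t => by
    rw [← Real.cosh_add_sinh]; ring
  rw [hexp x, hexp y, h.two_mul_cosh_left, h.two_mul_cosh_right] at hz
  obtain ⟨h00, h10, h01, h11⟩ := eq_zero_of_biquadratic_relation hW hV
    (h.irrational_sinh_left.natCast_mul two_ne_zero)
    (h.irrational_sinh_right.natCast_mul two_ne_zero) hwv
    (a := 4 * z.re.re + 2 * z.re.im * r + 2 * z.im.re * s + z.im.im * r * s)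
    (b := 2 * z.re.im + z.im.im * s) (c := 2 * z.im.re + z.im.im * r) (d := z.im.im)
    (by push_cast; linear_combination 4 * hz)
  simp only [h11, zero_mul, add_zero, mul_eq_zero, OfNat.ofNat_ne_zero, false_or] at h10 h01
  simp only [h11, h10, h01, mul_zero, zero_mul, add_zero, mul_eq_zero, OfNat.ofNat_ne_zero,
    false_or] at h00
  ext <;> simp [h00, h10, h01, h11]

theorem eval_mul_eval_neg_right (h : IsBiquadraticUnitPair r s x y) (z : BiquadraticOrder r s) :
    h.eval z * h.neg_right.eval z = h.evalLeft z.norm := by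
  refine quadraticEval_mul_quadraticEval_eq_norm _ _ _ ?_ ?_ z
  · rw [map_intCast, ← h.two_mul_cosh_right, Real.cosh_eq]; ring
  · rw [← Real.exp_add, add_neg_cancel, Real.exp_zero]; simp

theorem evalLeft_mul_evalLeft_neg_left (h : IsBiquadraticUnitPair r s x y)
    (z : QuadraticAlgebra ℤ (-1) r) : h.evalLeft z * h.neg_left.evalLeft z = z.norm := by
  refine quadraticEval_mul_quadraticEval_eq_norm _ _ _ ?_ ?_ z
  · rw [eq_intCast, ← h.two_mul_cosh_left, Real.cosh_eq]; ring
  · rw [← Real.exp_add, add_neg_cancel, Real.exp_zero]; simp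

/- The product of the four conjugates is a norm, hence a nonzero rational integer. -/
theorem one_le_abs_eval_mul (h : IsBiquadraticUnitPair r s x y) {z : BiquadraticOrder r s}
    (hz : z ≠ 0) : 1 ≤ |h.eval z| * |h.neg_right.eval z| *
      (|h.neg_left.eval z| * |h.neg_left.neg_right.eval z|) := by
  have hnorm : h.eval z * h.neg_right.eval z * (h.neg_left.eval z * h.neg_left.neg_right.eval z) =
      (z.norm.norm : ℤ) := by
    rw [eval_mul_eval_neg_right, eval_mul_eval_neg_right, evalLeft_mul_evalLeft_neg_left]
  have hne : ∀ {x' y' : ℝ} (h' : IsBiquadraticUnitPair r s x' y'), h'.eval z ≠ 0 := fun h' =>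
    (map_ne_zero_iff _ h'.eval_injective).2 hz
  rw [← abs_mul, ← abs_mul, ← abs_mul, hnorm]
  have : (z.norm.norm : ℝ) ≠ 0 := by
    rw [← hnorm]
    exact mul_ne_zero (mul_ne_zero (hne _) (hne _)) (mul_ne_zero (hne _) (hne _))
  exact_mod_cast Int.one_le_abs (by exact_mod_cast this)

theorem left_ne_zero (h : IsBiquadraticUnitPair r s x y) : x ≠ 0 := by
  rintro rfl
  exact h.irrational_sinh_left.ne_zero Real.sinh_zero

/- Conjugating `y` in a relation `p x = q y` gives `p x = -q y` as well. -/
theorem intCast_mul_ne_intCast_mul (h : IsBiquadraticUnitPair r s x y) {p : ℤ} (hp : p ≠ 0)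
    (q : ℤ) : p * x ≠ q * y := by
  intro hpq
  have hunits : ((BiquadraticOrder.eps r s ^ p : (BiquadraticOrder r s)ˣ) : BiquadraticOrder r s) =
      ↑(BiquadraticOrder.alpha r s ^ q) :=
    h.eval_injective (by rw [h.eval_zpow h.eval_eps, h.eval_zpow h.eval_alpha, hpq])
  have hconj := congrArg h.neg_right.eval hunits
  rw [eval_zpow _ h.neg_right.eval_eps, eval_zpow _ h.neg_right.eval_alpha,
    Real.exp_eq_exp] at hconj
  refine mul_ne_zero (Int.cast_ne_zero.2 hp) h.left_ne_zero ?_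
  linarith

end IsBiquadraticUnitPair

/-! ### Interpolation determinants -/

section AnalyticBound

theorem pow_div_factorial_le_exp_one_mul_pow {K k : ℕ} (hk : k ≤ K) {Y z : ℝ} (hY : 1 ≤ Y)
    (hz0 : 0 ≤ z) (hz : z ≤ Y * K) : z ^ k / k.factorial ≤ (Real.exp 1 * Y) ^ K := by
  have hfact : (K : ℝ) ^ k / k.factorial ≤ Real.exp 1 ^ K := by
    rw [← Real.exp_nat_mul, mul_one]
    exact Real.pow_div_factorial_le_exp _ (Nat.cast_nonneg K) k
  calc z ^ k / k.factorial ≤ (Y * K) ^ k / k.factorial := by gcongr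
    _ = Y ^ k * ((K : ℝ) ^ k / k.factorial) := by rw [mul_pow, mul_div_assoc]
    _ ≤ Y ^ K * Real.exp 1 ^ K := by gcongr
    _ = (Real.exp 1 * Y) ^ K := by rw [mul_pow, mul_comm]

theorem norm_eval_descPochhammer_div_factorial_le {K k : ℕ} (hk : k ≤ K) {Y : ℝ} (hY : 1 ≤ Y)
    {z : ℂ} (hz : ‖z‖ + K ≤ Y * K) :
    ‖(descPochhammer ℂ k).eval z / k.factorial‖ ≤ (Real.exp 1 * Y) ^ K := by
  have hprod : ‖(descPochhammer ℂ k).eval z‖ ≤ (‖z‖ + K) ^ k := by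
    rw [descPochhammer_eval_eq_prod_range, norm_prod]
    refine (prod_le_prod (fun _ _ => norm_nonneg _) (g := fun _ => ‖z‖ + K) fun i hi => ?_).trans_eq
      (by simp)
    have hiK : (i : ℝ) ≤ K := Nat.cast_le.2 ((mem_range.1 hi).le.trans hk)
    exact (norm_sub_le _ _).trans (by rw [Complex.norm_natCast]; gcongr)
  rw [norm_div, Complex.norm_natCast]
  exact (div_le_div_of_nonneg_right hprod (Nat.cast_nonneg _)).trans
    (pow_div_factorial_le_exp_one_mul_pow hk hY (by positivity) hz)

theorem norm_exp_add_neg_mul_le {E I Λ lam t δ : ℝ} {L ℓ N : ℕ} (hℓ : ℓ ≤ L) (hE : 0 ≤ E)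
    (ht0 : 0 ≤ t) (htI : t ≤ I) (hlam : |lam| ≤ Λ) (hδ : L * |δ| * E ^ N ≤ 1) {w : ℂ}
    (hw : ‖w‖ = E) :
    ‖Complex.exp (ℓ * lam * (w * t) + -(ℓ * δ) * w ^ N)‖ ≤ Real.exp (E * L * Λ * I + 1) := by
  have hℓL : (ℓ : ℝ) ≤ L := Nat.cast_le.2 hℓ
  have hΛ : 0 ≤ Λ := (abs_nonneg lam).trans hlam
  rw [Complex.norm_exp, Real.exp_le_exp]
  refine (Complex.re_le_norm _).trans ((norm_add_le _ _).trans (add_le_add ?_ (le_trans ?_ hδ)))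
  · simp only [norm_mul, Complex.norm_natCast, Complex.norm_real, Real.norm_eq_abs, hw,
      abs_of_nonneg ht0]
    calc ℓ * |lam| * (E * t) ≤ L * Λ * (E * I) := by gcongr
      _ = E * L * Λ * I := by ring
  · simp only [norm_mul, norm_neg, norm_pow, Complex.norm_natCast, Complex.norm_real,
      Real.norm_eq_abs, hw]
    gcongr

theorem abs_det_interpolationMatrix_mul_pow_le {K L : ℕ} {n : Fin K × Fin L → ℕ}
    (hn : Function.Injective n) {I : ℝ} (hI : ∀ i, (n i : ℝ) ≤ I) {lam Λ : ℝ} (hlam : |lam| ≤ Λ)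
    {E : ℝ} (hE : 1 < E) {μ : Fin K × Fin L → ℝ} (hμ : ∀ i, L * |μ i| * E ^ (K * L) ≤ 1)
    {Y : ℝ} (hY : 1 ≤ Y) (hYI : E * I + K ≤ Y * K) :
    |(interpolationMatrix K L n fun i => Real.exp (n i * lam - μ i)).det| *
        E ^ (K * L * (K * L - 1) / 2) ≤
      (K * L).factorial *
        ((Real.exp 1 * Y) ^ K * Real.exp (E * L * Λ * I + 1)) ^ (K * L) := by
  have hE0 : 0 < E := one_pos.trans hE
  have hcard : Fintype.card (Fin K × Fin L) = K * L := by simp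
  let ψ : Fin K × Fin L → ℂ → ℂ := fun j z =>
    (descPochhammer ℂ j.1).eval z / (j.1 : ℕ).factorial * Complex.exp ((j.2 : ℕ) * lam * z)
  have hψ : ∀ j, Differentiable ℂ (ψ j) := fun j =>
    ((Polynomial.differentiable _).div_const _).mul (by fun_prop)
  have hbound := norm_det_mul_pow_le (x := fun i => (n i : ℂ)) (Nat.cast_injective.comp hn) hψ
    (fun i j => -((j.2 : ℕ) * μ i : ℂ)) (M := (Real.exp 1 * Y) ^ K * Real.exp (E * L * Λ * I + 1))
    hE fun w hw i j => by
      have hwn : ‖w * (n i : ℂ)‖ ≤ E * I := by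
        rw [norm_mul, hw, Complex.norm_natCast]
        exact mul_le_mul_of_nonneg_left (hI i) hE0.le
      rw [mul_assoc, ← Complex.exp_add, norm_mul, hcard]
      refine mul_le_mul (norm_eval_descPochhammer_div_factorial_le j.1.2.le hY (by linarith)) ?_
        (norm_nonneg _) (by positivity)
      exact_mod_cast norm_exp_add_neg_mul_le j.2.2.le hE0.le (Nat.cast_nonneg (n i)) (hI i) hlam
        (hμ i) hw
  rw [hcard] at hbound
  refine le_trans (le_of_eq ?_) hbound
  rw [← Real.norm_eq_abs, ← Complex.norm_real, ← Complex.ofRealHom_eq_coe, RingHom.map_det]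
  congr 3
  ext i j
  have hfact : ((j.1 : ℕ).factorial : ℂ) ≠ 0 := Nat.cast_ne_zero.2 (Nat.factorial_ne_zero _)
  simp only [RingHom.mapMatrix_apply, map_apply, of_apply, interpolationMatrix, ψ,
    Complex.ofRealHom_eq_coe, descPochhammer_eval_eq_descFactorial,
    Nat.descFactorial_eq_factorial_mul_choose]
  push_cast
  rw [← Complex.exp_nat_mul, mul_assoc, ← Complex.exp_add, mul_div_cancel_left₀ _ hfact]
  ring_nf

end AnalyticBound

section ArithmeticBound

variable {r s : ℤ} {x y : ℝ}

theorem abs_map_det_le {R n : Type*} [CommRing R] [Fintype n] [DecidableEq n] (f : R →+* ℝ)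
    {M : Matrix n n R} {B : ℝ} (hM : ∀ i j, |f (M i j)| ≤ B) :
    |f M.det| ≤ (Fintype.card n).factorial * B ^ Fintype.card n := by
  rw [RingHom.map_det, ← nsmul_eq_mul]
  exact det_le (abv := AbsoluteValue.abs) hM

theorem one_le_abs_eval_det_mul {n : Type*} [Fintype n] [DecidableEq n]
    (h : IsBiquadraticUnitPair r s x y) {M : Matrix n n (BiquadraticOrder r s)}
    (hdet : M.det ≠ 0) {B₁ B₂ B₃ : ℝ} (h₁ : ∀ i j, |h.neg_right.eval (M i j)| ≤ B₁)
    (h₂ : ∀ i j, |h.neg_left.eval (M i j)| ≤ B₂)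
    (h₃ : ∀ i j, |h.neg_left.neg_right.eval (M i j)| ≤ B₃) :
    1 ≤ |h.eval M.det| *
      ((Fintype.card n).factorial ^ 3 * (B₁ * B₂ * B₃) ^ Fintype.card n) := by
  have hb₁ := abs_map_det_le _ h₁
  have hb₂ := abs_map_det_le _ h₂
  have hb₃ := abs_map_det_le _ h₃
  have hpos₁ := (abs_nonneg _).trans hb₁
  have hpos₂ := (abs_nonneg _).trans hb₂
  calc (1 : ℝ) ≤ |h.eval M.det| * |h.neg_right.eval M.det| *
        (|h.neg_left.eval M.det| * |h.neg_left.neg_right.eval M.det|) := h.one_le_abs_eval_mul hdet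
    _ ≤ |h.eval M.det| * ((Fintype.card n).factorial * B₁ ^ Fintype.card n) *
        ((Fintype.card n).factorial * B₂ ^ Fintype.card n *
          ((Fintype.card n).factorial * B₃ ^ Fintype.card n)) := by gcongr
    _ = _ := by ring

/-- The interpolation matrix at the points `(n i, v i / d i)` with row `i` multiplied by `d i ^ L`,
which makes its entries integral. -/
def integralInterpolationMatrix {ι R : Type*} [CommRing R] (K L : ℕ) (n d : ι → ℕ) (v : ι → R) :
    Matrix ι (Fin K × Fin L) R :=
  of fun i j => ((n i).choose j.1 : R) * (v i ^ (j.2 : ℕ) * (d i : R) ^ (L - j.2))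

theorem map_det_integralInterpolationMatrix {R : Type*} [CommRing R] (f : R →+* ℝ) {K L : ℕ}
    {n d : Fin K × Fin L → ℕ} {v : Fin K × Fin L → R} {ω : Fin K × Fin L → ℝ}
    (hv : ∀ i, f (v i) = d i * ω i) :
    f (integralInterpolationMatrix K L n d v).det =
      (∏ i, (d i : ℝ) ^ L) * (interpolationMatrix K L n ω).det := by
  rw [RingHom.map_det, ← det_mul_column]
  congr 1
  ext i j
  simp only [integralInterpolationMatrix, interpolationMatrix, RingHom.mapMatrix_apply, map_apply,
    of_apply, map_mul, map_pow, map_natCast, hv, mul_pow]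
  rw [← pow_mul_pow_sub (d i : ℝ) j.2.2.le]
  ring

theorem abs_map_integralInterpolationMatrix_le {ι R : Type*} [CommRing R] (f : R →+* ℝ) {K L : ℕ}
    {n d : ι → ℕ} {v : ι → R} {Y V₀ V : ℝ} (hY : 1 ≤ Y) (hn : ∀ i, (n i : ℝ) ≤ Y * K)
    (hd : ∀ i, (d i : ℝ) ≤ Real.exp V₀) (hv : ∀ i, |f (v i)| ≤ Real.exp V) (hV : V₀ ≤ V)
    (i : ι) (j : Fin K × Fin L) :
    |f (integralInterpolationMatrix K L n d v i j)| ≤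
      (Real.exp 1 * Y) ^ K * Real.exp (L * V) := by
  have hchoose : ((n i).choose j.1 : ℝ) ≤ (Real.exp 1 * Y) ^ K :=
    (Nat.choose_le_pow_div _ _).trans
      (pow_div_factorial_le_exp_one_mul_pow j.1.2.le hY (Nat.cast_nonneg _) (hn i))
  have hd' : (d i : ℝ) ≤ Real.exp V := (hd i).trans (Real.exp_le_exp.2 hV)
  simp only [integralInterpolationMatrix, of_apply, map_mul, map_pow, map_natCast, abs_mul, abs_pow,
    Nat.abs_cast]
  calc ((n i).choose j.1 : ℝ) * (|f (v i)| ^ (j.2 : ℕ) * (d i : ℝ) ^ (L - j.2))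
      ≤ (Real.exp 1 * Y) ^ K * (Real.exp V ^ (j.2 : ℕ) * Real.exp V ^ (L - j.2)) := by
        gcongr; exact hv i
    _ = (Real.exp 1 * Y) ^ K * Real.exp (L * V) := by
        rw [pow_mul_pow_sub _ j.2.2.le, ← Real.exp_nat_mul]

theorem log_factorial_le (N : ℕ) : Real.log N.factorial ≤ N * Real.log N := by
  rw [← Real.log_pow]
  exact Real.log_le_log (by positivity) (by exact_mod_cast Nat.factorial_le_pow N)

theorem log_inequality_of_pow_le {N : ℕ} (hN : 0 < N) {E A W : ℝ} (hE : 0 < E) (hA : 0 < A)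
    (h : E ^ (N * (N - 1) / 2) ≤ (N.factorial : ℝ) ^ 4 * (A * Real.exp W) ^ N) :
    (N - 1) / 2 * Real.log E ≤ 4 * Real.log N + Real.log A + W := by
  have hlog := Real.log_le_log (by positivity) h
  rw [Real.log_mul (by positivity) (by positivity), Real.log_pow, Real.log_pow, Real.log_pow,
    Real.log_mul hA.ne' (Real.exp_ne_zero W), Real.log_exp,
    Nat.cast_div (Nat.even_mul_pred_self N).two_dvd two_ne_zero, Nat.cast_mul, Nat.cast_pred hN]
    at hlog
  have hfact := log_factorial_le N
  have hN' : (0 : ℝ) < N := Nat.cast_pos.2 hN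
  refine le_of_mul_le_mul_left ?_ hN'
  push_cast at hlog
  linarith

theorem exp_pow_mul_pow_mul_eq {K L N : ℕ} {B V₀ V₁ V₂ V₃ W : ℝ} :
    Real.exp (L * V₀) ^ N * (B ^ K * Real.exp (L * V₁) * (B ^ K * Real.exp (L * V₂)) *
        (B ^ K * Real.exp (L * V₃))) ^ N * (B ^ K * Real.exp W) ^ N =
      (B ^ (4 * K) * Real.exp (L * (V₀ + V₁ + V₂ + V₃) + W)) ^ N := by
  rw [← mul_pow, ← mul_pow]
  simp only [mul_add, Real.exp_add]
  ring

theorem le_pow_four_mul_of_one_le_mul {P Δ F A Q B T : ℝ} (hP : 0 ≤ P) (hΔ : 0 ≤ Δ) (hF : 0 ≤ F)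
    (hQ : 0 ≤ Q) (hT : 0 ≤ T) (hlower : 1 ≤ P * Δ * (F ^ 3 * Q)) (hPA : P ≤ A)
    (hupper : Δ * T ≤ F * B) : T ≤ F ^ 4 * (A * Q * B) := by
  have hA : 0 ≤ A := hP.trans hPA
  calc T ≤ P * Δ * (F ^ 3 * Q) * T := le_mul_of_one_le_left hT hlower
    _ = P * (F ^ 3 * Q) * (Δ * T) := by ring
    _ ≤ A * (F ^ 3 * Q) * (F * B) := by gcongr
    _ = F ^ 4 * (A * Q * B) := by ring

/- The interpolation determinant is bounded above by the Schwarz lemma and below by the product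
formula. -/
theorem interpolation_inequality (h : IsBiquadraticUnitPair r s x y) {K L : ℕ} (hK : 0 < K)
    (hL : 0 < L) {n d : Fin K × Fin L → ℕ} (hn : Function.Injective n)
    {v : Fin K × Fin L → BiquadraticOrder r s} {μ : Fin K × Fin L → ℝ} {lam : ℝ}
    (hv : ∀ i, h.eval (v i) = d i * Real.exp (n i * lam - μ i)) (hd0 : ∀ i, 0 < d i)
    (hdet : (interpolationMatrix K L n fun i => Real.exp (n i * lam - μ i)).det ≠ 0)
    {I Λ E Y : ℝ} (hI : ∀ i, (n i : ℝ) ≤ I) (hlam : |lam| ≤ Λ) (hE : 1 < E)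
    (hμ : ∀ i, L * |μ i| * E ^ (K * L) ≤ 1) (hY : 1 ≤ Y) (hYI : E * I + K ≤ Y * K)
    {V₀ V₁ V₂ V₃ : ℝ} (hd : ∀ i, (d i : ℝ) ≤ Real.exp V₀)
    (hv₁ : ∀ i, |h.neg_right.eval (v i)| ≤ Real.exp V₁)
    (hv₂ : ∀ i, |h.neg_left.eval (v i)| ≤ Real.exp V₂)
    (hv₃ : ∀ i, |h.neg_left.neg_right.eval (v i)| ≤ Real.exp V₃)
    (hV₁ : V₀ ≤ V₁) (hV₂ : V₀ ≤ V₂) (hV₃ : V₀ ≤ V₃) :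
    ((K * L : ℕ) - 1) / 2 * Real.log E ≤ 4 * Real.log (K * L : ℕ) + 4 * K * (1 + Real.log Y) +
      (L * (V₀ + V₁ + V₂ + V₃) + (E * L * Λ * I + 1)) := by
  have hnY : ∀ i, (n i : ℝ) ≤ Y * K := fun i => by
    have : (n i : ℝ) ≤ E * n i := le_mul_of_one_le_left (Nat.cast_nonneg _) hE.le
    linarith [mul_le_mul_of_nonneg_left (hI i) (one_pos.trans hE).le, Nat.cast_nonneg (α := ℝ) K]
  have hcard : Fintype.card (Fin K × Fin L) = K * L := by simp
  have heval := map_det_integralInterpolationMatrix h.eval (n := n) hv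
  have hprod0 : 0 < ∏ i, (d i : ℝ) ^ L :=
    prod_pos fun i _ => pow_pos (Nat.cast_pos.2 (hd0 i)) L
  have hprod : ∏ i, (d i : ℝ) ^ L ≤ Real.exp (L * V₀) ^ (K * L) := by
    rw [← hcard, ← card_univ, ← prod_const, Real.exp_nat_mul]
    gcongr with i
    exact hd i
  have hupper := abs_det_interpolationMatrix_mul_pow_le hn hI hlam hE hμ hY hYI
  have hlower := one_le_abs_eval_det_mul h
    (fun h0 => mul_ne_zero hprod0.ne' hdet (by rw [← heval, h0, map_zero]))
    (abs_map_integralInterpolationMatrix_le _ hY hnY hd hv₁ hV₁)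
    (abs_map_integralInterpolationMatrix_le _ hY hnY hd hv₂ hV₂)
    (abs_map_integralInterpolationMatrix_le _ hY hnY hd hv₃ hV₃)
  rw [heval, abs_mul, abs_of_pos hprod0, hcard] at hlower
  have hpow : E ^ (K * L * (K * L - 1) / 2) ≤ ((K * L).factorial : ℝ) ^ 4 *
      ((Real.exp 1 * Y) ^ (4 * K) *
        Real.exp (L * (V₀ + V₁ + V₂ + V₃) + (E * L * Λ * I + 1))) ^ (K * L) := by
    rw [← exp_pow_mul_pow_mul_eq]
    exact le_pow_four_mul_of_one_le_mul hprod0.le (abs_nonneg _) (by positivity) (by positivity)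
      (by positivity) hlower hprod hupper
  have hlogY : Real.log ((Real.exp 1 * Y) ^ (4 * K)) = 4 * K * (1 + Real.log Y) := by
    rw [Real.log_pow, Real.log_mul (Real.exp_ne_zero 1) (by positivity), Real.log_exp]
    push_cast
    ring
  rw [← hlogY]
  exact log_inequality_of_pow_le (Nat.mul_pos hK hL) (one_pos.trans hE) (by positivity) hpow

end ArithmeticBound

/-! ### A lower bound for linear forms in logarithms -/

section BlockPoint

variable {l p j j' t t' : ℕ}

/-- The `t`-th natural number `n` with `n * p ≥ j * l`. When `(t + 1) * p ≤ l` it satisfies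
`n * p / l = j`, so the points with small `t` form blocks on which `n * p / l` is constant and
`n * p % l` is small. -/
def blockPoint (l p j t : ℕ) : ℕ := j * l ⌈/⌉ p + t

theorem blockPoint_add (l p j t g : ℕ) : blockPoint l p j (t + g) = blockPoint l p j t + g :=
  (add_assoc _ _ _).symm

theorem mul_le_blockPoint_mul (hp : 0 < p) : j * l ≤ blockPoint l p j t * p := by
  have hceil : j * l ≤ p * (j * l ⌈/⌉ p) := by simpa using le_smul_ceilDiv hp (b := j * l)
  rw [blockPoint]
  nlinarith

theorem blockPoint_mul_lt (hp : 0 < p) : blockPoint l p j t * p < j * l + (t + 1) * p := by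
  have hceil : (j * l + p - 1) / p * p ≤ j * l + p - 1 := Nat.div_mul_le_self _ _
  rw [blockPoint, Nat.ceilDiv_eq_add_pred_div, add_mul, add_one_mul]
  omega

theorem blockPoint_mul_div (hp : 0 < p) (hl : (t + 1) * p ≤ l) : blockPoint l p j t * p / l = j :=
  Nat.div_eq_of_lt_le (mul_le_blockPoint_mul hp) <| by
    rw [add_one_mul]
    exact (blockPoint_mul_lt hp).trans_le (Nat.add_le_add_left hl _)

theorem blockPoint_mul_mod_lt (hp : 0 < p) (hl : (t + 1) * p ≤ l) :
    blockPoint l p j t * p % l < (t + 1) * p := by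
  have hdivmod := Nat.div_add_mod (blockPoint l p j t * p) l
  rw [blockPoint_mul_div hp hl, mul_comm l] at hdivmod
  have := blockPoint_mul_lt (l := l) (j := j) (t := t) hp
  omega

theorem blockPoint_le (hp : 0 < p) (hl : (t + 1) * p ≤ l) {C : ℕ} (hj : j < C * p) :
    blockPoint l p j t ≤ C * l := by
  refine Nat.le_of_mul_le_mul_right ?_ hp
  calc blockPoint l p j t * p ≤ j * l + l := (blockPoint_mul_lt hp).le.trans (by gcongr)
    _ = (j + 1) * l := (add_one_mul _ _).symm
    _ ≤ C * p * l := Nat.mul_le_mul_right l hj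
    _ = C * l * p := mul_right_comm _ _ _

theorem blockPoint_inj (hp : 0 < p) (hl : (t + 1) * p ≤ l) (hl' : (t' + 1) * p ≤ l) :
    blockPoint l p j t = blockPoint l p j' t' ↔ j = j' ∧ t = t' := by
  refine ⟨fun h => ?_, by rintro ⟨rfl, rfl⟩; rfl⟩
  have hj : j = j' :=
    (blockPoint_mul_div hp hl).symm.trans (h ▸ blockPoint_mul_div hp hl')
  subst hj
  exact ⟨rfl, Nat.add_left_cancel h⟩

end BlockPoint

section LinearForm

variable {r s : ℤ} {x y κ B : ℝ} {β : BiquadraticOrder r s} {D : ℕ}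

/-- `κ` is the logarithm of the algebraic number `D / β`, and `exp B` bounds `D` as well as the
conjugates of `β`. -/
structure IsLogOfQuotient (h : IsBiquadraticUnitPair r s x y) (β : BiquadraticOrder r s) (D : ℕ)
    (κ B : ℝ) : Prop where
  pos : 0 < D
  eval_eq : h.eval β = D * Real.exp (-κ)
  natCast_le : (D : ℝ) ≤ Real.exp B
  abs_eval_neg_right_le : |h.neg_right.eval β| ≤ Real.exp B
  abs_eval_neg_left_le : |h.neg_left.eval β| ≤ Real.exp B
  abs_eval_neg_neg_le : |h.neg_left.neg_right.eval β| ≤ Real.exp B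

theorem IsLogOfQuotient.nonneg {h : IsBiquadraticUnitPair r s x y}
    (hβ : IsLogOfQuotient h β D κ B) : 0 ≤ B :=
  Real.one_le_exp_iff.1 ((Nat.one_le_cast.2 hβ.pos).trans hβ.natCast_le)

/-- The exponent of `α` in `(ε ^ p * α ^ (-q)) ^ n * (ε ^ l * α ^ (-m)) ^ (-j)` for
`j = n * p / l`; the exponent of `ε` is then `n * p % l`. -/
def reducedExponent (l m p : ℕ) (q : ℤ) (n : ℕ) : ℤ := (n * p / l : ℕ) * m - n * q

/-- The element `(ε ^ p * α ^ (-q)) ^ n * (ε ^ l * α ^ (-m) * β⁻¹) ^ (-j)` with `j = n * p / l`. If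
`ε ^ l * α ^ (-m)` is close to `β / D`, then this is close to `D ^ j * (ε ^ p * α ^ (-q)) ^ n`,
although its exponents stay small. -/
noncomputable def reducedPower (β : BiquadraticOrder r s) (l m p : ℕ) (q : ℤ) (n : ℕ) :
    BiquadraticOrder r s :=
  ↑(BiquadraticOrder.eps r s ^ ((n * p % l : ℕ) : ℤ)) *
    ↑(BiquadraticOrder.alpha r s ^ reducedExponent l m p q n) * β ^ (n * p / l)

theorem mod_mul_add_reducedExponent_mul (l m p : ℕ) (q : ℤ) (n : ℕ) (x y : ℝ) :
    (n * p % l : ℕ) * x + reducedExponent l m p q n * y =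
      n * (p * x - q * y) - (n * p / l : ℕ) * (l * x - m * y) := by
  have hdivmod : (l * (n * p / l : ℕ) + (n * p % l : ℕ) : ℝ) = n * p := by
    exact_mod_cast Nat.div_add_mod (n * p) l
  simp only [reducedExponent, Int.cast_sub, Int.cast_mul, Int.cast_natCast]
  linear_combination x * hdivmod

theorem eval_reducedPower (h : IsBiquadraticUnitPair r s x y) (l m p : ℕ) (q : ℤ) (n : ℕ) :
    h.eval (reducedPower β l m p q n) =
      Real.exp ((n * p % l : ℕ) * x + reducedExponent l m p q n * y) * h.eval β ^ (n * p / l) := by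
  rw [reducedPower, map_mul, map_mul, map_pow, h.eval_zpow h.eval_eps, h.eval_zpow h.eval_alpha,
    ← Real.exp_add, Int.cast_natCast]

theorem eval_reducedPower_eq_pow_mul_exp {h : IsBiquadraticUnitPair r s x y}
    (hβ : IsLogOfQuotient h β D κ B) (l m p : ℕ) (q : ℤ) (n : ℕ) :
    h.eval (reducedPower β l m p q n) = (D ^ (n * p / l) : ℕ) *
      Real.exp (n * (p * x - q * y) - (n * p / l : ℕ) * (l * x - m * y + κ)) := by
  rw [eval_reducedPower, mod_mul_add_reducedExponent_mul, hβ.eval_eq, mul_pow, ← Real.exp_nat_mul,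
    mul_left_comm, ← Real.exp_add, Nat.cast_pow]
  ring_nf

theorem abs_eval_reducedPower_le (h : IsBiquadraticUnitPair r s x y) (hβ : |h.eval β| ≤ Real.exp B)
    (hB : 0 ≤ B) {l m p n S : ℕ} {q : ℤ} {V : ℝ} (hS : n * p / l ≤ S)
    (hV : (n * p % l : ℕ) * x + reducedExponent l m p q n * y ≤ V) :
    |h.eval (reducedPower β l m p q n)| ≤ Real.exp (V + S * B) := by
  rw [eval_reducedPower, abs_mul, abs_pow, Real.abs_exp, Real.exp_add V,
    Real.exp_nat_mul B]
  refine mul_le_mul (Real.exp_le_exp.2 hV) ?_ (pow_nonneg (abs_nonneg _) _)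
    (Real.exp_nonneg V)
  calc |h.eval β| ^ (n * p / l) ≤ Real.exp B ^ (n * p / l) := by gcongr
    _ ≤ Real.exp B ^ S := pow_le_pow_right₀ (Real.one_le_exp hB) hS

theorem abs_mod_mul_add_reducedExponent_mul_le {l m p n S : ℕ} {q : ℤ} {I Λ χ : ℝ}
    (hΛ : |p * x - q * y| ≤ Λ) (hχ : |l * x - m * y + κ| + |κ| ≤ χ) (hI : (n : ℝ) ≤ I)
    (hS : n * p / l ≤ S) :
    |(n * p % l : ℕ) * x + reducedExponent l m p q n * y| ≤ I * Λ + S * χ := by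
  have hS' : ((n * p / l : ℕ) : ℝ) ≤ S := Nat.cast_le.2 hS
  have hform : |l * x - m * y| ≤ χ := by
    have := abs_sub (l * x - m * y + κ) κ
    rw [add_sub_cancel_right] at this
    exact this.trans hχ
  have hΛ0 := (abs_nonneg _).trans hΛ
  have hI0 := (Nat.cast_nonneg n).trans hI
  have hχ0 := (abs_nonneg _).trans hform
  rw [mod_mul_add_reducedExponent_mul]
  refine (abs_sub _ _).trans ?_
  rw [abs_mul, abs_mul, Nat.abs_cast, Nat.abs_cast]
  gcongr

theorem injective_exp_pow {t : ℝ} (ht : t ≠ 0) : Function.Injective fun n : ℕ => Real.exp t ^ n :=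
  fun a b hab => by
    simp only [← Real.exp_nat_mul, Real.exp_eq_exp] at hab
    exact_mod_cast mul_right_cancel₀ ht hab

/- On a block `n * p / l` is constant, so there the nodes form a geometric progression and the zero
estimate applies. -/
theorem exists_det_interpolationMatrix_blockPoint_ne_zero {K L R C l p : ℕ} (hp : 0 < p)
    (hK : 0 < K) (hcard : K * L ≤ C * p * R) (hl : (R + L) * p ≤ l) {lam : ℝ} (hlam : lam ≠ 0)
    (δ : ℝ) : ∃ n : Fin K × Fin L → ℕ, Function.Injective n ∧
      (∀ i, n i ≤ C * l ∧ n i * p / l ≤ C * p ∧ n i * p % l ≤ (R + L) * p) ∧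
      (interpolationMatrix K L n fun i =>
        Real.exp (n i * lam - (n i * p / l : ℕ) * δ)).det ≠ 0 := by
  have hfit : ∀ {t}, t < R + L → (t + 1) * p ≤ l := fun ht => (Nat.mul_le_mul_right p ht).trans hl
  let base : Fin (C * p) × Fin R → ℕ := fun b => blockPoint l p b.1 b.2
  have hbase : Function.Injective base := fun b b' hbb' => by
    obtain ⟨h₁, h₂⟩ := (blockPoint_inj hp (hfit (by omega)) (hfit (by omega))).1 hbb'
    exact Prod.ext (Fin.ext h₁) (Fin.ext h₂)
  obtain ⟨f, hf⟩ := exists_det_interpolationMatrix_ne_zero (K := K) (L := L) hK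
    (by simpa using hcard) hbase
    (ω := fun b => Real.exp (base b * lam - (b.1 : ℕ) * δ)) (fun b => Real.exp_ne_zero _)
    ((injective_exp_pow hlam).comp Fin.val_injective)
  have hlt : ∀ i, ((f i).1.2 + (f i).2 : ℕ) < R + L := fun i => by omega
  have hω : ∀ i, Real.exp (base (f i).1 * lam - ((f i).1.1 : ℕ) * δ) *
      Real.exp lam ^ ((f i).2 : ℕ) = Real.exp ((base (f i).1 + (f i).2 : ℕ) * lam -
        ((base (f i).1 + (f i).2) * p / l : ℕ) * δ) := fun i => by
    rw [← blockPoint_add, blockPoint_mul_div hp (hfit (hlt i)), blockPoint_add,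
      ← Real.exp_nat_mul, ← Real.exp_add]
    simp only [base]
    push_cast
    ring_nf
  simp only [hω] at hf
  refine ⟨_, fun i i' hii' => ?_, fun i => ?_, hf⟩
  · by_contra hne
    exact hf (det_zero_of_row_eq hne (by ext; simp only [interpolationMatrix, of_apply, hii']))
  · rw [← blockPoint_add]
    exact ⟨blockPoint_le hp (hfit (hlt i)) (f i).1.1.2,
      (blockPoint_mul_div hp (hfit (hlt i))).trans_le (f i).1.1.2.le,
      (blockPoint_mul_mod_lt hp (hfit (hlt i))).le.trans (Nat.mul_le_mul_right p (hlt i))⟩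

theorem linear_form_inequality {h : IsBiquadraticUnitPair r s x y} (hx : 0 ≤ x)
    (hβ : IsLogOfQuotient h β D κ B) {l m p : ℕ} {q : ℤ} (hp : 0 < p) {K L R C : ℕ} (hK : 0 < K)
    (hL : 0 < L) (hcard : K * L ≤ C * p * R) (hl : (R + L) * p ≤ l) {Λ χ E Y : ℝ}
    (hΛ : |p * x - q * y| ≤ Λ) (hχ : |l * x - m * y + κ| + |κ| ≤ χ) (hE : 1 < E)
    (hδ : L * (C * p * |l * x - m * y + κ|) * E ^ (K * L) ≤ 1) (hY : 1 ≤ Y)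
    (hYI : E * (C * l) + K ≤ Y * K) :
    ((K * L : ℕ) - 1) / 2 * Real.log E ≤ 4 * Real.log (K * L : ℕ) + 4 * K * (1 + Real.log Y) +
      (L * (2 * ((R + L) * p) * x + 3 * (C * l * Λ + C * p * χ) + 4 * (C * p * B)) +
        (E * L * Λ * (C * l) + 1)) := by
  have hlam : p * x - q * y ≠ 0 :=
    sub_ne_zero.2 (by exact_mod_cast h.intCast_mul_ne_intCast_mul (p := p) (by omega) q)
  obtain ⟨n, hn, hbounds, hdet⟩ :=
    exists_det_interpolationMatrix_blockPoint_ne_zero hp hK hcard hl hlam (l * x - m * y + κ)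
  have hnI : ∀ i, (n i : ℝ) ≤ C * l := fun i => by exact_mod_cast (hbounds i).1
  have hnS : ∀ i, n i * p / l ≤ C * p := fun i => (hbounds i).2.1
  have hnH : ∀ i, ((n i * p % l : ℕ) : ℝ) * x ≤ (R + L) * p * x := fun i =>
    mul_le_mul_of_nonneg_right (by exact_mod_cast (hbounds i).2.2) hx
  have hT := fun i => abs_le.1 (abs_mod_mul_add_reducedExponent_mul_le hΛ hχ (hnI i) (hnS i))
  push_cast at hT
  have hT0 : 0 ≤ C * l * Λ + C * p * χ := by
    have hΛ0 := (abs_nonneg _).trans hΛ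
    have hχ0 := (add_nonneg (abs_nonneg _) (abs_nonneg _)).trans hχ
    positivity
  have hX0 : ∀ i, 0 ≤ ((n i * p % l : ℕ) : ℝ) * x := fun i => by positivity
  have hH0 : 0 ≤ (R + L) * p * x := by positivity
  refine (interpolation_inequality h hK hL hn (fun i => eval_reducedPower_eq_pow_mul_exp hβ l m p q
    (n i)) (fun i => pow_pos hβ.pos _) hdet hnI hΛ hE (fun i => ?_) hY hYI
    (V₀ := (C * p : ℕ) * B)
    (V₁ := 2 * ((R + L) * p) * x + (C * l * Λ + C * p * χ) + (C * p : ℕ) * B)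
    (V₂ := C * l * Λ + C * p * χ + (C * p : ℕ) * B) (V₃ := C * l * Λ + C * p * χ + (C * p : ℕ) * B)
    (fun i => ?_)
    (fun i => abs_eval_reducedPower_le _ hβ.abs_eval_neg_right_le hβ.nonneg (hnS i) ?_)
    (fun i => abs_eval_reducedPower_le _ hβ.abs_eval_neg_left_le hβ.nonneg (hnS i) ?_)
    (fun i => abs_eval_reducedPower_le _ hβ.abs_eval_neg_neg_le hβ.nonneg (hnS i) ?_)
    ?_ ?_ ?_).trans_eq ?_
  · refine le_trans ?_ hδ
    rw [abs_mul, Nat.abs_cast]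
    gcongr
    exact_mod_cast hnS i
  · rw [Nat.cast_pow, Real.exp_nat_mul]
    calc (D : ℝ) ^ (n i * p / l) ≤ Real.exp B ^ (n i * p / l) := by gcongr; exact hβ.natCast_le
      _ ≤ Real.exp B ^ (C * p) := pow_le_pow_right₀ (Real.one_le_exp hβ.nonneg) (hnS i)
  · linarith [hT i, hnH i]
  · linarith [hT i, hnH i, hX0 i]
  · linarith [hT i, hnH i]
  · linarith
  · linarith
  · linarith
  · push_cast; ring

end LinearForm

section Parameters

theorem exists_nat_abs_mul_sub_mul_le {x y : ℝ} (hy : 0 < y) (hyx : y ≤ x) {Q : ℕ} (hQ : 0 < Q) :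
    ∃ p : ℕ, 0 < p ∧ p ≤ Q ∧ ∃ q : ℤ, |p * x - q * y| ≤ x / Q := by
  obtain ⟨p, hp, hpQ, hpq⟩ := Real.exists_nat_abs_mul_sub_round_le (x / y) hQ
  refine ⟨p, hp, hpQ, round (p * (x / y)), ?_⟩
  have hfactor : p * x - round (p * (x / y)) * y = y * (p * (x / y) - round (p * (x / y))) := by
    field_simp
  have hQ' : (0 : ℝ) < Q := Nat.cast_pos.2 hQ
  rw [hfactor, abs_mul, abs_of_pos hy, div_eq_mul_one_div x (Q : ℝ)]
  exact mul_le_mul hyx (hpq.trans (one_div_le_one_div_of_le hQ' (by linarith))) (abs_nonneg _)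
    (hy.le.trans hyx)

theorem log_le_div_two_pow_add {N : ℝ} (hN : 0 < N) (k : ℕ) :
    Real.log N ≤ N / 2 ^ k + k * Real.log 2 := by
  have hsplit : Real.log N = Real.log (N / 2 ^ k) + k * Real.log 2 := by
    rw [← Real.log_pow, ← Real.log_mul (by positivity) (by positivity),
      div_mul_cancel₀ _ (by positivity)]
  rw [hsplit]
  gcongr
  exact (Real.log_le_sub_one_of_pos (by positivity)).trans (sub_le_self _ zero_le_one)

theorem log_sixteen : Real.log 16 = 4 * Real.log 2 := by
  rw [show (16 : ℝ) = 2 ^ 4 by norm_num, Real.log_pow, Nat.cast_ofNat]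

theorem sixteen_pow_le_exp {N : ℕ} {l x : ℝ} (hlx : 0 ≤ l * x) (hN : N ≤ 0.55 * (l * x)) :
    (16 : ℝ) ^ N ≤ Real.exp (1.6 * (l * x)) := by
  rw [← Real.exp_log (show (0 : ℝ) < 16 by norm_num), ← Real.exp_nat_mul, log_sixteen,
    Real.exp_le_exp]
  have := mul_le_mul hN Real.log_two_lt_d9.le (Real.log_pos one_lt_two).le (by positivity)
  linarith

theorem mul_mul_sixteen_pow_le_one {N : ℕ} {c l x δ : ℝ} (hx : 10 ≤ x) (hl : 10 ≤ l) (hc : c ≤ l)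
    (hN : N ≤ 0.55 * (l * x)) (hδ0 : 0 ≤ δ) (hδ : δ ≤ Real.exp (-(2 * l - 1) * x)) :
    c * δ * 16 ^ N ≤ 1 := by
  have hc' : c ≤ Real.exp (0.1 * (l * x)) :=
    calc c ≤ l := hc
      _ ≤ Real.exp l := by linarith [Real.add_one_le_exp l]
      _ ≤ Real.exp (0.1 * (l * x)) := Real.exp_le_exp.2 (by nlinarith)
  calc c * δ * 16 ^ N
      ≤ Real.exp (0.1 * (l * x)) * Real.exp (-(2 * l - 1) * x) * Real.exp (1.6 * (l * x)) := by
        gcongr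
        exact sixteen_pow_le_exp (by positivity) hN
    _ = Real.exp (-((0.3 * l - 1) * x)) := by rw [← Real.exp_add, ← Real.exp_add]; ring_nf
    _ ≤ 1 := Real.exp_le_one_iff.2 (neg_nonpos.2 (mul_nonneg (by linarith) (by linarith)))

theorem not_linear_form_inequality {G x l p N H : ℝ} (hx : 0 ≤ x) (hxG : x ≤ G) (hG : 10 ≤ G)
    (hl : 10 ^ 17 ≤ l) (hpG : p * (10 ^ 8 * G) ≤ l) (hN : 0.4995 * (l * G) ≤ N)
    (hH : H ≤ 0.001001 * l) :
    ¬ (N - 1) / 2 * Real.log 16 ≤ 4 * Real.log N + 4 * (N / 100) * (1 + Real.log (2 ^ 21)) +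
      (100 * (2 * H * x + 3 * (500 * G * l * (x / (2 * 10 ^ 7 * G)) + 500 * G * p * (2 * x)) +
        4 * (500 * G * p * (3 * x))) +
          (16 * 100 * (x / (2 * 10 ^ 7 * G)) * (500 * G * l) + 1)) := by
  have hz : 10 ^ 18 ≤ l * G := by nlinarith
  have hlogN := log_le_div_two_pow_add (show 0 < N by linarith) 6
  have hHx : H * x ≤ 0.001001 * (l * G) :=
    calc H * x ≤ 0.001001 * l * G := mul_le_mul hH hxG hx (by linarith)
      _ = 0.001001 * (l * G) := by ring
  have hΛ : G * l * (x / (2 * 10 ^ 7 * G)) ≤ l * G / (2 * 10 ^ 7) := by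
    have : G * l * (x / (2 * 10 ^ 7 * G)) = l * x / (2 * 10 ^ 7) := by field_simp
    rw [this]
    gcongr
  have hpx : G * p * x ≤ l * G / 10 ^ 8 := by
    rw [le_div_iff₀ (by norm_num)]
    calc G * p * x * 10 ^ 8 = p * (10 ^ 8 * G) * x := by ring
      _ ≤ l * G := mul_le_mul hpG hxG hx (by linarith)
  have hlog := mul_le_mul_of_nonneg_left Real.log_two_gt_d9.le (show 0 ≤ N by linarith)
  rw [log_sixteen, Real.log_pow, not_le]
  push_cast at hlogN ⊢
  linarith [Real.log_two_lt_d9]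

theorem mul_le_and_quotient_bounds {G l p : ℕ} (hG : 10 ≤ G) (hl : 2 * 10 ^ 15 * G ^ 2 ≤ l)
    (hp : 0 < p) (hpG : p ≤ 2 * 10 ^ 7 * G) :
    p * (10 ^ 8 * G) ≤ l ∧ 1000 * (p * (l / (1000 * p))) ≤ l ∧
      999 * l ≤ 1000 * (1000 * (p * (l / (1000 * p)))) := by
  have hmul : p * (10 ^ 8 * G) ≤ l :=
    calc p * (10 ^ 8 * G) ≤ 2 * 10 ^ 7 * G * (10 ^ 8 * G) := Nat.mul_le_mul_right _ hpG
      _ = 2 * 10 ^ 15 * G ^ 2 := by ring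
      _ ≤ l := hl
  have hdiv := Nat.div_add_mod l (1000 * p)
  have hmod := Nat.mod_lt l (show 0 < 1000 * p by positivity)
  rw [mul_assoc] at hdiv
  have hpl : p * 10 ^ 9 ≤ l := le_trans (Nat.mul_le_mul_left p (by omega)) hmul
  exact ⟨hmul, by omega, by omega⟩

theorem node_count_bounds {G l p R : ℕ} (hR : 1000 * (p * R) ≤ l)
    (hR' : 999 * l ≤ 1000 * (1000 * (p * R))) :
    ((5 * G * p * R * 100 : ℕ) : ℝ) ≤ 0.5 * (l * G) ∧
      0.4995 * (l * G) ≤ ((5 * G * p * R * 100 : ℕ) : ℝ) := by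
  have hN : ((5 * G * p * R * 100 : ℕ) : ℝ) = 0.5 * (1000 * (p * R) * G) := by push_cast; ring
  rify at hR hR'
  have hlower : 0.999 * l * G ≤ 1000 * (p * R : ℝ) * G :=
    mul_le_mul_of_nonneg_right (by linarith) (Nat.cast_nonneg G)
  rw [hN]
  exact ⟨by gcongr, by linarith⟩

end Parameters

/- There are `500 G p` blocks of `R` nodes each, and `K = 5 G p R`, `L = 100` are chosen so that
`K L` equals the number of nodes. -/
theorem lt_of_abs_linear_form_le {r s : ℤ} {x y κ : ℝ} {β : BiquadraticOrder r s} {D l m : ℕ}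
    {h : IsBiquadraticUnitPair r s x y} (hx : 10 ≤ x) (hy : 0 < y) (hyx : y ≤ x)
    (hβ : IsLogOfQuotient h β D κ (3 * x)) (hκ : |κ| ≤ x)
    (hδ : |l * x - m * y + κ| ≤ Real.exp (-(2 * l - 1) * x)) :
    l < 2 * 10 ^ 15 * ⌈x⌉₊ ^ 2 := by
  by_contra! hl
  set G := ⌈x⌉₊
  have hxG : x ≤ G := Nat.le_ceil x
  have hGx : (G : ℝ) ≤ 1.1 * x := by linarith [Nat.ceil_lt_add_one (show 0 ≤ x by linarith)]
  have hG : 10 ≤ G := by exact_mod_cast hx.trans hxG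
  obtain ⟨p, hp, hpG, q, hpq⟩ := exists_nat_abs_mul_sub_mul_le hy hyx (Q := 2 * 10 ^ 7 * G)
    (by positivity)
  obtain ⟨hpl, hR, hR'⟩ := mul_le_and_quotient_bounds hG hl hp hpG
  set R := l / (1000 * p)
  obtain ⟨hN, hN'⟩ := node_count_bounds (G := G) hR hR'
  have hl17 : 10 ^ 17 ≤ l := le_trans (by nlinarith) hl
  have hp9 : p * 10 ^ 9 ≤ l := le_trans (Nat.mul_le_mul_left p (by omega)) hpl
  have hK : 0 < 5 * G * p * R := by
    have : 0 < R := Nat.pos_of_ne_zero fun hR0 => by rw [hR0] at hR'; omega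
    positivity
  have hlG : (l * G : ℝ) ≤ 1.1 * (l * x) := by
    rw [mul_left_comm]; gcongr
  rify at hpl hR hp9 hG hl17
  have hδ1 : |l * x - m * y + κ| ≤ x := hδ.trans <|
    (Real.exp_le_one_iff.2 (by nlinarith)).trans (by linarith)
  have hsmall := mul_mul_sixteen_pow_le_one (c := 100 * (500 * G * p)) hx (by linarith)
    (by linarith) (N := 5 * G * p * R * 100) (by linarith) (abs_nonneg _) hδ
  refine not_linear_form_inequality (H := (R + 100) * p) (by linarith) hxG hG hl17 hpl hN'
    (by linarith) ?_
  have hineq := linear_form_inequality (l := l) (m := m) (by linarith) hβ hp hK (L := 100)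
    (by norm_num) (C := 500 * G) (R := R) (by apply le_of_eq; ring) (by rify; linarith) hpq
    (χ := 2 * x) (by linarith) (E := 16) (by norm_num) (by push_cast; linarith)
    (Y := 2 ^ 21) (by norm_num) (by push_cast at hN' ⊢; linarith)
  push_cast at hineq ⊢
  linarith

/-! ### The linear form attached to two Lucas-type sequences -/

section Hyperbolic

theorem two_mul_sinh_sq {x r : ℝ} (h : 2 * Real.cosh x = r) :
    (2 * Real.sinh x) ^ 2 = r ^ 2 - 4 := by
  rw [← h]
  linear_combination 4 * Real.sinh_sq x

theorem exp_le_two_mul_cosh (x : ℝ) : Real.exp x ≤ 2 * Real.cosh x := by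
  rw [Real.cosh_eq]
  linarith [Real.exp_pos (-x)]

theorem two_mul_cosh_sub_one_le_exp {x : ℝ} (hx : 0 ≤ x) : 2 * Real.cosh x - 1 ≤ Real.exp x := by
  rw [Real.cosh_eq]
  linarith [Real.exp_le_one_iff.2 (neg_nonpos.2 hx)]

theorem exists_pos_two_mul_cosh_eq {r : ℝ} (hr : 2 < r) : ∃ x, 0 < x ∧ 2 * Real.cosh x = r :=
  ⟨Real.arcosh (r / 2), Real.arcosh_pos (by linarith), by
    rw [Real.cosh_arcosh (by linarith), mul_div_cancel₀ r two_ne_zero]⟩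

theorem eq_mul_exp_add_mul_exp_neg_of_recurrence {x t : ℝ} {P : ℕ → ℝ} (h0 : P 0 = 2)
    (h1 : P 1 = 2 * Real.cosh x + t * (2 * Real.sinh x))
    (hrec : ∀ n, P (n + 2) = 2 * Real.cosh x * P (n + 1) - P n) (n : ℕ) :
    P n = (1 + t) * Real.exp (n * x) + (1 - t) * Real.exp (-(n * x)) := by
  induction n using Nat.twoStepInduction with
  | zero => rw [h0]; norm_num
  | one => rw [h1, Real.cosh_eq, Real.sinh_eq, Nat.cast_one, one_mul]; ring
  | more n ih ih' =>
    have hmul : Real.exp x * Real.exp (-x) = 1 := by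
      rw [← Real.exp_add, add_neg_cancel, Real.exp_zero]
    rw [hrec, ih, ih', Real.cosh_eq]
    push_cast
    simp only [add_mul, one_mul, two_mul, neg_add, Real.exp_add]
    linear_combination ((1 + t) * Real.exp (n * x) + (1 - t) * Real.exp (-(n * x))) * hmul

end Hyperbolic

section SizeOfLinearForm

theorem log_sub_log_le_div {x y : ℝ} (hx : 0 < x) (hy : 0 < y) :
    Real.log y - Real.log x ≤ (y - x) / x := by
  rw [← Real.log_div hy.ne' hx.ne', sub_div, div_self hx.ne']
  exact Real.log_le_sub_one_of_pos (div_pos hy hx)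

theorem abs_log_sub_log_le {U W u w : ℝ} (hU : 2 ≤ U) (hW : 2 ≤ W) (hu : u ∈ Set.Icc 0 1)
    (hw : w ∈ Set.Icc 0 1) (h : U + u / U = W + w / W) :
    |Real.log U - Real.log W| ≤ 4 / U ^ 2 := by
  have hU0 : 0 < U := by linarith
  have hW0 : 0 < W := by linarith
  have huU : u / U ∈ Set.Icc 0 (1 / U) := ⟨div_nonneg hu.1 hU0.le, by gcongr; exact hu.2⟩
  have hwW : w / W ∈ Set.Icc 0 (1 / W) := ⟨div_nonneg hw.1 hW0.le, by gcongr; exact hw.2⟩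
  have hUW : U / 2 ≤ W := by
    have : 1 / W ≤ 1 / 2 := by gcongr
    linarith [huU.1, hwW.2]
  rw [abs_le, neg_le, neg_sub]
  constructor
  · calc Real.log W - Real.log U ≤ (W - U) / U := log_sub_log_le_div hU0 hW0
      _ ≤ 1 / U / U := by gcongr; linarith [huU.2, hwW.1]
      _ = 1 / U ^ 2 := by rw [div_div, sq]
      _ ≤ 4 / U ^ 2 := by gcongr; norm_num
  · calc Real.log U - Real.log W ≤ (U - W) / W := log_sub_log_le_div hW0 hU0
      _ ≤ 1 / W / W := by gcongr; linarith [huU.1, hwW.2]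
      _ = 1 / W ^ 2 := by rw [div_div, sq]
      _ ≤ 1 / (U / 2) ^ 2 := by gcongr
      _ = 4 / U ^ 2 := by field_simp; norm_num

theorem abs_log_one_add_le_one {t : ℝ} (ht : |t| ≤ 0.62) : |Real.log (1 + t)| ≤ 1 := by
  obtain ⟨ht₁, ht₂⟩ := abs_le.1 ht
  have hpos : 0 < 1 + t := by linarith
  rw [abs_le, Real.le_log_iff_exp_le hpos, Real.log_le_iff_le_exp hpos]
  have he := Real.exp_one_gt_d9
  refine ⟨?_, by linarith⟩
  calc Real.exp (-1) = (Real.exp 1)⁻¹ := Real.exp_neg 1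
    _ ≤ 2.7⁻¹ := by gcongr; linarith
    _ ≤ 1 + t := by norm_num at ht₁ ⊢; linarith

theorem one_add_mul_one_sub_mem_Icc {t : ℝ} (ht : |t| ≤ 1) : (1 + t) * (1 - t) ∈ Set.Icc 0 1 := by
  have hsq : t ^ 2 ≤ 1 := (sq_le_one_iff_abs_le_one t).2 ht
  constructor <;> nlinarith [sq_nonneg t]

theorem one_add_mul_exp_add_eq {t z : ℝ} (ht : 1 + t ≠ 0) :
    (1 + t) * Real.exp z + (1 + t) * (1 - t) / ((1 + t) * Real.exp z) =
      (1 + t) * Real.exp z + (1 - t) * Real.exp (-z) := by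
  rw [mul_div_mul_left _ _ ht, Real.exp_neg, div_eq_mul_inv]

theorem two_le_one_add_mul_exp {t x : ℝ} {n : ℕ} (ht : |t| ≤ 0.62) (hx : 5 ≤ x) (hn : 1 ≤ n) :
    2 ≤ (1 + t) * Real.exp (n * x) := by
  have hn' : (1 : ℝ) ≤ n := by exact_mod_cast hn
  have hexp : 6 ≤ Real.exp (n * x) := by nlinarith [Real.add_one_le_exp (n * x)]
  have ht' : 0.38 ≤ 1 + t := by have := (abs_le.1 ht).1; norm_num at this ⊢; linarith
  nlinarith

theorem abs_linear_form_le {x y t u : ℝ} {l m : ℕ} (hx : 10 ≤ x) (hy : 5 ≤ y) (ht : |t| ≤ 0.62)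
    (hu : |u| ≤ 0.62) (hl : 1 ≤ l) (hm : 1 ≤ m)
    (h : (1 + t) * Real.exp (l * x) + (1 - t) * Real.exp (-(l * x)) =
      (1 + u) * Real.exp (m * y) + (1 - u) * Real.exp (-(m * y))) :
    |l * x - m * y + (Real.log (1 + t) - Real.log (1 + u))| ≤ Real.exp (-(2 * l - 1) * x) := by
  have ht0 : 0.38 ≤ 1 + t := by have := (abs_le.1 ht).1; norm_num at this ⊢; linarith
  have htp : 0 < 1 + t := by linarith
  have hup : 0 < 1 + u := by linarith [(abs_le.1 hu).1]
  have hlog : l * x - m * y + (Real.log (1 + t) - Real.log (1 + u)) =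
      Real.log ((1 + t) * Real.exp (l * x)) - Real.log ((1 + u) * Real.exp (m * y)) := by
    rw [Real.log_mul htp.ne' (Real.exp_ne_zero _), Real.log_mul hup.ne' (Real.exp_ne_zero _),
      Real.log_exp, Real.log_exp]
    ring
  have hexp : 4 ≤ Real.exp x * (1 + t) ^ 2 := by
    have h28 : 28 ≤ Real.exp x := by
      linarith [Real.quadratic_le_exp_of_nonneg (show 0 ≤ x by linarith),
        mul_self_nonneg (x - 10)]
    calc (4 : ℝ) ≤ 28 * 0.38 ^ 2 := by norm_num
      _ ≤ Real.exp x * (1 + t) ^ 2 := by gcongr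
  rw [← one_add_mul_exp_add_eq htp.ne', ← one_add_mul_exp_add_eq hup.ne'] at h
  rw [hlog]
  calc |Real.log ((1 + t) * Real.exp (l * x)) - Real.log ((1 + u) * Real.exp (m * y))|
      ≤ 4 / ((1 + t) * Real.exp (l * x)) ^ 2 :=
        abs_log_sub_log_le (two_le_one_add_mul_exp ht (by linarith) hl)
          (two_le_one_add_mul_exp hu hy hm)
          (one_add_mul_one_sub_mem_Icc (ht.trans (by norm_num)))
          (one_add_mul_one_sub_mem_Icc (hu.trans (by norm_num))) h
    _ ≤ Real.exp x * (1 + t) ^ 2 / ((1 + t) * Real.exp (l * x)) ^ 2 := by gcongr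
    _ = Real.exp x / Real.exp (l * x) ^ 2 := by field_simp
    _ = Real.exp (-(2 * l - 1) * x) := by
      rw [← Real.exp_nat_mul, ← Real.exp_sub]
      congr 1
      push_cast
      ring

end SizeOfLinearForm

/-! ### The triples `{a, ka, a + ka - 2r}` -/

theorem irrational_of_sq_lt_of_lt_add_one_sq {x : ℝ} {W n : ℤ} (hx : x ^ 2 = W) (hn : 0 ≤ n)
    (hlt : n ^ 2 < W) (hlt' : W < (n + 1) ^ 2) : Irrational x := by
  refine irrational_nrt_of_notint_nrt 2 W hx ?_ two_pos
  rintro ⟨y, rfl⟩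
  have hy : y ^ 2 = W := by exact_mod_cast hx
  rw [← hy, sq_lt_sq, abs_of_nonneg hn] at hlt
  rw [← hy] at hlt'
  have := abs_lt_of_sq_lt_sq hlt' (by omega)
  omega

theorem irrational_of_sq_eq_sq_sub_four {x : ℝ} {r : ℤ} (hr : 3 ≤ r) (hx : x ^ 2 = r ^ 2 - 4) :
    Irrational x :=
  irrational_of_sq_lt_of_lt_add_one_sq (W := r ^ 2 - 4) (n := r - 1) (by exact_mod_cast hx)
    (by linarith) (by linarith) (by linarith)

theorem abs_div_le_of_sq_le {q w : ℝ} (hw : 0 < w) (h : 2.7 * q ^ 2 ≤ w ^ 2) : |q / w| ≤ 0.62 := by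
  refine abs_le_of_sq_le_sq ?_ (by norm_num)
  rw [div_pow, div_le_iff₀ (by positivity)]
  linarith [sq_nonneg q]

theorem intCast_sq_eq_one {σ : ℤ} (hσ : |σ| = 1) : (σ : ℝ) ^ 2 = 1 := by
  rw [← sq_abs, ← Int.cast_abs, hσ, Int.cast_one, one_pow]

theorem abs_add_mul_le {c v τ : ℝ} (hτ : |τ| = 1) (hv : |v| ≤ c) : |c + τ * v| ≤ 2 * c := by
  have hc : 0 ≤ c := (abs_nonneg v).trans hv
  calc |c + τ * v| ≤ |c| + |τ * v| := abs_add_le _ _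
    _ ≤ 2 * c := by rw [abs_mul, hτ, abs_of_nonneg hc]; linarith

/-- The element `(c + τ √(ac)) (ka - σ √(ka²))` of `ℤ[ε, α]`, whose quotient by `(k - 1) c a` is
`(1 + τ a / √(ac)) / (1 + σ a / √(ka²))`. -/
def quotientNumerator (k a r c s σ τ : ℤ) : BiquadraticOrder r s :=
  ((c - τ * s : ℤ) + (2 * τ : ℤ) * BiquadraticOrder.alpha r s) *
    ((k * a + σ * r : ℤ) - (2 * σ : ℤ) * BiquadraticOrder.eps r s)

theorem eval_quotientNumerator {k a r c s σ τ : ℤ} {x y : ℝ} (h : IsBiquadraticUnitPair r s x y) :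
    h.eval (quotientNumerator k a r c s σ τ) =
      (c + τ * (2 * Real.sinh y)) * (k * a + -σ * (2 * Real.sinh x)) := by
  have hα : Real.exp y = (s + 2 * Real.sinh y) / 2 := by
    rw [← h.two_mul_cosh_right, ← Real.cosh_add_sinh]; ring
  have hε : Real.exp x = (r + 2 * Real.sinh x) / 2 := by
    rw [← h.two_mul_cosh_left, ← Real.cosh_add_sinh]; ring
  simp only [quotientNumerator, map_mul, map_add, map_sub, map_intCast, h.eval_alpha, h.eval_eps,
    hα, hε]
  push_cast
  ring

/-- The logarithm `log (1 + σ a / √(ka²)) - log (1 + τ a / √(ac))` of the quotient of the leading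
coefficients of `P` and `Q`. -/
noncomputable def leadingLog (a σ τ : ℤ) (x y : ℝ) : ℝ :=
  Real.log (1 + σ * a / (2 * Real.sinh x)) - Real.log (1 + τ * a / (2 * Real.sinh y))

/-- The regular `D(4)`-triples `{a, ka, c}` with `c = a + ka - 2r` and `ac + 4 = s²`, in the range
of parameters under consideration. -/
structure IsRegularTriple (k a r c s : ℤ) : Prop where
  seven_le : 7 ≤ k
  le_thirteen : k ≤ 13
  le_a : 10864 ≤ a
  r_pos : 0 < r
  mul_sq_add_four : k * a ^ 2 + 4 = r ^ 2
  c_eq : c = a + k * a - 2 * r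
  s_eq : s = r - a

namespace IsRegularTriple

variable {k a r c s σ τ : ℤ} {x y : ℝ} {P Q : ℕ → ℤ} {l m : ℕ}

theorem a_mul_c (hT : IsRegularTriple k a r c s) : a * c = s ^ 2 - 4 := by
  rw [hT.c_eq, hT.s_eq]
  linear_combination hT.mul_sq_add_four

theorem r_bounds (hT : IsRegularTriple k a r c s) : 26 * a ≤ 10 * r ∧ 100 * r ≤ 361 * a := by
  have ha := hT.le_a
  have hr := hT.r_pos
  have hlow : 7 * a ^ 2 ≤ k * a ^ 2 := mul_le_mul_of_nonneg_right hT.seven_le (sq_nonneg a)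
  have hupp : k * a ^ 2 ≤ 13 * a ^ 2 := mul_le_mul_of_nonneg_right hT.le_thirteen (sq_nonneg a)
  have hsq : 10864 ^ 2 ≤ a ^ 2 := by gcongr
  have hr2 := hT.mul_sq_add_four
  exact ⟨le_of_sq_le_sq (by linarith) (by linarith), le_of_sq_le_sq (by linarith) (by linarith)⟩

theorem le_c (hT : IsRegularTriple k a r c s) : 27 * a ≤ 10 * c := by
  have ha := hT.le_a
  have hk := hT.seven_le
  have hr : 20 * r ≤ (10 * k - 17) * a := by
    refine le_of_sq_le_sq ?_ (mul_nonneg (by linarith) (by linarith))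
    have hpoly : 9 ≤ (10 * k - 17) ^ 2 - 400 * k := by nlinarith
    have hsq : 10864 ^ 2 ≤ a ^ 2 := by gcongr
    have := mul_le_mul_of_nonneg_right hpoly (sq_nonneg a)
    linarith [hT.mul_sq_add_four]
  rw [hT.c_eq]
  linarith

theorem le_s (hT : IsRegularTriple k a r c s) : 16 * a ≤ 10 * s := by
  linarith [hT.s_eq, hT.r_bounds.1]

theorem irrational_sqrt_mul_sqrt (hT : IsRegularTriple k a r c s) {w v : ℝ}
    (hw : w ^ 2 = r ^ 2 - 4) (hv : v ^ 2 = s ^ 2 - 4) : Irrational (w * v) := by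
  have ha := hT.le_a
  have hrs : 416 * a ^ 2 ≤ 100 * (r * s) := by
    have : (26 * a) * (16 * a) ≤ (10 * r) * (10 * s) :=
      mul_le_mul hT.r_bounds.1 hT.le_s (by linarith) (by linarith [hT.r_pos])
    linarith
  have hsq : 10864 ^ 2 ≤ a ^ 2 := by gcongr
  have hdiff : (r - s) ^ 2 = a ^ 2 := by rw [hT.s_eq]; ring
  exact irrational_of_sq_lt_of_lt_add_one_sq (W := (r ^ 2 - 4) * (s ^ 2 - 4)) (n := r * s - 5)
    (by push_cast; rw [mul_pow, hw, hv]) (by linarith) (by linarith) (by linarith)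

theorem isBiquadraticUnitPair (hT : IsRegularTriple k a r c s) (hx : 2 * Real.cosh x = r)
    (hy : 2 * Real.cosh y = s) : IsBiquadraticUnitPair r s x y where
  two_mul_cosh_left := hx
  two_mul_cosh_right := hy
  irrational_sinh_left := by
    refine Irrational.of_intCast_mul 2 (irrational_of_sq_eq_sq_sub_four (r := r) ?_ ?_)
    · linarith [hT.le_a, hT.r_bounds.1]
    · exact_mod_cast two_mul_sinh_sq hx
  irrational_sinh_right := by
    refine Irrational.of_intCast_mul 2 (irrational_of_sq_eq_sq_sub_four (r := s) ?_ ?_)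
    · linarith [hT.le_a, hT.le_s]
    · exact_mod_cast two_mul_sinh_sq hy
  irrational_sinh_mul_sinh := by
    refine Irrational.of_intCast_mul 4 ?_
    convert hT.irrational_sqrt_mul_sqrt (two_mul_sinh_sq hx) (two_mul_sinh_sq hy) using 1
    push_cast
    ring

theorem exists_isBiquadraticUnitPair (hT : IsRegularTriple k a r c s) :
    ∃ x y, 0 < x ∧ 0 < y ∧ IsBiquadraticUnitPair r s x y := by
  have hr : 2 < r := by linarith [hT.le_a, hT.r_bounds.1]
  have hs : 2 < s := by linarith [hT.le_a, hT.le_s]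
  obtain ⟨x, hx, hxr⟩ := exists_pos_two_mul_cosh_eq (r := r) (by exact_mod_cast hr)
  obtain ⟨y, hy, hys⟩ := exists_pos_two_mul_cosh_eq (r := s) (by exact_mod_cast hs)
  exact ⟨x, y, hx, hy, hT.isBiquadraticUnitPair hxr hys⟩

theorem le_exp_left (hT : IsRegularTriple k a r c s) (hx : 0 < x)
    (hxr : 2 * Real.cosh x = r) : 2.5 * a ≤ Real.exp x := by
  have hexp := two_mul_cosh_sub_one_le_exp hx.le
  have ha : (10864 : ℝ) ≤ a := by exact_mod_cast hT.le_a
  have hr : (26 * a : ℝ) ≤ 10 * r := by exact_mod_cast hT.r_bounds.1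
  linarith

theorem exp_left_le (hT : IsRegularTriple k a r c s) (hxr : 2 * Real.cosh x = r) :
    Real.exp x ≤ 3.61 * a := by
  have hexp := exp_le_two_mul_cosh x
  have hr : (100 * r : ℝ) ≤ 361 * a := by exact_mod_cast hT.r_bounds.2
  linarith

theorem ten_le_left (hT : IsRegularTriple k a r c s) (hx : 0 < x)
    (hxr : 2 * Real.cosh x = r) : 10 ≤ x := by
  have ha : (10864 : ℝ) ≤ a := by exact_mod_cast hT.le_a
  rw [← Real.exp_le_exp]
  calc Real.exp 10 = Real.exp 1 ^ 10 := by rw [← Real.exp_nat_mul]; norm_num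
    _ ≤ 2.719 ^ 10 := by gcongr; linarith [Real.exp_one_lt_d9]
    _ ≤ 2.5 * a := by norm_num; linarith
    _ ≤ Real.exp x := hT.le_exp_left hx hxr

theorem left_add_one_le_log (hT : IsRegularTriple k a r c s)
    (hxr : 2 * Real.cosh x = r) : x + 1 ≤ Real.log (21.3 * a) := by
  have ha : (10864 : ℝ) ≤ a := by exact_mod_cast hT.le_a
  rw [Real.le_log_iff_exp_le (by positivity), Real.exp_add]
  calc Real.exp x * Real.exp 1 ≤ 3.61 * a * 2.72 := by
        gcongr
        exacts [hT.exp_left_le hxr, by linarith [Real.exp_one_lt_d9]]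
    _ ≤ 21.3 * a := by linarith

theorem right_le_left (hT : IsRegularTriple k a r c s) (hx : 0 < x) (hy : 0 < y)
    (h : IsBiquadraticUnitPair r s x y) : y ≤ x := by
  have hsr : (s : ℝ) ≤ r := by exact_mod_cast (show s ≤ r by linarith [hT.s_eq, hT.le_a])
  have hcosh : Real.cosh y ≤ Real.cosh x := by
    linarith [h.two_mul_cosh_left, h.two_mul_cosh_right]
  rwa [Real.cosh_le_cosh, abs_of_pos hx, abs_of_pos hy] at hcosh

theorem left_le_two_mul_right (hT : IsRegularTriple k a r c s) (hy : 0 < y)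
    (h : IsBiquadraticUnitPair r s x y) : x ≤ 2 * y := by
  have ha : (10864 : ℝ) ≤ a := by exact_mod_cast hT.le_a
  have hs : (16 * a : ℝ) ≤ 10 * s := by exact_mod_cast hT.le_s
  have hexp : 1.5 * a ≤ Real.exp y := by
    linarith [two_mul_cosh_sub_one_le_exp hy.le, h.two_mul_cosh_right]
  rw [← Real.exp_le_exp]
  calc Real.exp x ≤ 3.61 * a := hT.exp_left_le h.two_mul_cosh_left
    _ ≤ (1.5 * a) ^ 2 := by nlinarith
    _ ≤ Real.exp y ^ 2 := by gcongr
    _ = Real.exp (2 * y) := by rw [← Real.exp_nat_mul]; norm_num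

theorem two_mul_sinh_left_sq (hT : IsRegularTriple k a r c s) (hxr : 2 * Real.cosh x = r) :
    (2 * Real.sinh x) ^ 2 = k * a ^ 2 := by
  have hr : (k * a ^ 2 + 4 : ℝ) = r ^ 2 := by exact_mod_cast hT.mul_sq_add_four
  rw [two_mul_sinh_sq hxr, ← hr, add_sub_cancel_right]

theorem two_mul_sinh_right_sq (hT : IsRegularTriple k a r c s) (hys : 2 * Real.cosh y = s) :
    (2 * Real.sinh y) ^ 2 = a * c := by
  have hac : (a * c : ℝ) = s ^ 2 - 4 := by exact_mod_cast hT.a_mul_c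
  rw [two_mul_sinh_sq hys, hac]

theorem abs_div_two_mul_sinh_left_le (hT : IsRegularTriple k a r c s) (hx : 0 < x)
    (hxr : 2 * Real.cosh x = r) (hσ : |σ| = 1) : |σ * a / (2 * Real.sinh x)| ≤ 0.62 := by
  refine abs_div_le_of_sq_le (mul_pos two_pos (Real.sinh_pos_iff.2 hx)) ?_
  have hσ2 : (σ ^ 2 : ℝ) = 1 := intCast_sq_eq_one hσ
  have hk : (7 : ℝ) ≤ k := by exact_mod_cast hT.seven_le
  rw [hT.two_mul_sinh_left_sq hxr, mul_pow, hσ2, one_mul]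
  gcongr
  linarith

theorem abs_div_two_mul_sinh_right_le (hT : IsRegularTriple k a r c s) (hy : 0 < y)
    (hys : 2 * Real.cosh y = s) (hτ : |τ| = 1) : |τ * a / (2 * Real.sinh y)| ≤ 0.62 := by
  refine abs_div_le_of_sq_le (mul_pos two_pos (Real.sinh_pos_iff.2 hy)) ?_
  have hτ2 : (τ ^ 2 : ℝ) = 1 := intCast_sq_eq_one hτ
  have ha : (10864 : ℝ) ≤ a := by exact_mod_cast hT.le_a
  have hc : (27 * a : ℝ) ≤ 10 * c := by exact_mod_cast hT.le_c
  rw [hT.two_mul_sinh_right_sq hys, mul_pow, hτ2]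
  nlinarith

theorem abs_two_mul_sinh_left_le (hT : IsRegularTriple k a r c s)
    (hxr : 2 * Real.cosh x = r) : |2 * Real.sinh x| ≤ k * a := by
  have hk : (7 : ℝ) ≤ k := by exact_mod_cast hT.seven_le
  have ha : (10864 : ℝ) ≤ a := by exact_mod_cast hT.le_a
  refine abs_le_of_sq_le_sq ?_ (by positivity)
  rw [hT.two_mul_sinh_left_sq hxr, mul_pow]
  gcongr
  exact le_self_pow₀ (by linarith) two_ne_zero

theorem abs_two_mul_sinh_right_le (hT : IsRegularTriple k a r c s)
    (hys : 2 * Real.cosh y = s) : |2 * Real.sinh y| ≤ c := by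
  have ha : (10864 : ℝ) ≤ a := by exact_mod_cast hT.le_a
  have hc : (27 * a : ℝ) ≤ 10 * c := by exact_mod_cast hT.le_c
  refine abs_le_of_sq_le_sq ?_ (by linarith)
  rw [hT.two_mul_sinh_right_sq hys]
  nlinarith

theorem four_mul_c_mul_le_exp (hT : IsRegularTriple k a r c s) (hx : 0 < x)
    (hxr : 2 * Real.cosh x = r) : 4 * (c * (k * a)) ≤ Real.exp (3 * x) := by
  have ha : (10864 : ℝ) ≤ a := by exact_mod_cast hT.le_a
  have hk : (7 : ℝ) ≤ k := by exact_mod_cast hT.seven_le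
  have hk' : (k : ℝ) ≤ 13 := by exact_mod_cast hT.le_thirteen
  have hc : (c : ℝ) ≤ k * a := by
    exact_mod_cast (show c ≤ k * a by linarith [hT.c_eq, hT.r_bounds.1, hT.le_a])
  calc (4 * (c * (k * a)) : ℝ) ≤ 4 * (k * a * (k * a)) := by gcongr
    _ ≤ 4 * (13 * a * (13 * a)) := by gcongr
    _ ≤ 2.5 ^ 3 * (10864 * a ^ 2) := by nlinarith
    _ ≤ 2.5 ^ 3 * (a * a ^ 2) := by gcongr
    _ = (2.5 * a) ^ 3 := by ring
    _ ≤ Real.exp x ^ 3 := by gcongr; exact hT.le_exp_left hx hxr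
    _ = Real.exp (3 * x) := by rw [← Real.exp_nat_mul]; norm_num

theorem abs_eval_quotientNumerator_le (hT : IsRegularTriple k a r c s)
    (h : IsBiquadraticUnitPair r s x y) (hσ : |σ| = 1) (hτ : |τ| = 1) :
    |h.eval (quotientNumerator k a r c s σ τ)| ≤ 4 * (c * (k * a)) := by
  have hσ' : |(-σ : ℝ)| = 1 := by rw [abs_neg]; exact_mod_cast hσ
  have hτ' : |(τ : ℝ)| = 1 := by exact_mod_cast hτ
  have hright := hT.abs_two_mul_sinh_right_le h.two_mul_cosh_right
  rw [eval_quotientNumerator, abs_mul]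
  calc _ ≤ 2 * (c : ℝ) * (2 * (k * a)) :=
        mul_le_mul (abs_add_mul_le hτ' hright)
          (abs_add_mul_le hσ' (hT.abs_two_mul_sinh_left_le h.two_mul_cosh_left)) (abs_nonneg _)
          (mul_nonneg zero_le_two ((abs_nonneg _).trans hright))
    _ = 4 * (c * (k * a)) := by ring

theorem abs_leadingLog_le (hT : IsRegularTriple k a r c s) (h : IsBiquadraticUnitPair r s x y)
    (hx : 0 < x) (hy : 0 < y) (hσ : |σ| = 1) (hτ : |τ| = 1) : |leadingLog a σ τ x y| ≤ 2 := by
  refine (abs_sub _ _).trans ?_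
  linarith [abs_log_one_add_le_one (hT.abs_div_two_mul_sinh_left_le hx h.two_mul_cosh_left hσ),
    abs_log_one_add_le_one (hT.abs_div_two_mul_sinh_right_le hy h.two_mul_cosh_right hτ)]

theorem exp_neg_leadingLog (hT : IsRegularTriple k a r c s) (h : IsBiquadraticUnitPair r s x y)
    (hx : 0 < x) (hy : 0 < y) (hσ : |σ| = 1) (hτ : |τ| = 1) :
    Real.exp (-leadingLog a σ τ x y) =
      (1 + τ * a / (2 * Real.sinh y)) / (1 + σ * a / (2 * Real.sinh x)) := by
  have hleft := (abs_le.1 (hT.abs_div_two_mul_sinh_left_le hx h.two_mul_cosh_left hσ)).1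
  have hright := (abs_le.1 (hT.abs_div_two_mul_sinh_right_le hy h.two_mul_cosh_right hτ)).1
  rw [leadingLog, neg_sub, Real.exp_sub, Real.exp_log (by linarith), Real.exp_log (by linarith)]

theorem eval_quotientNumerator_eq (hT : IsRegularTriple k a r c s)
    (h : IsBiquadraticUnitPair r s x y) (hx : 0 < x) (hy : 0 < y) (hσ : |σ| = 1) (hτ : |τ| = 1) :
    h.eval (quotientNumerator k a r c s σ τ) =
      (k - 1) * c * a * Real.exp (-leadingLog a σ τ x y) := by
  have hσ2 : (σ ^ 2 : ℝ) = 1 := intCast_sq_eq_one hσ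
  have hdiv := (abs_le.1 (hT.abs_div_two_mul_sinh_left_le hx h.two_mul_cosh_left hσ)).1
  have hw2 := hT.two_mul_sinh_left_sq h.two_mul_cosh_left
  have hv2 := hT.two_mul_sinh_right_sq h.two_mul_cosh_right
  have hw : 0 < 2 * Real.sinh x := mul_pos two_pos (Real.sinh_pos_iff.2 hx)
  have hv : 0 < 2 * Real.sinh y := mul_pos two_pos (Real.sinh_pos_iff.2 hy)
  rw [hT.exp_neg_leadingLog h hx hy hσ hτ, eval_quotientNumerator]
  generalize 2 * Real.sinh x = w at *
  generalize 2 * Real.sinh y = v at *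
  have hleft : (k * a + -σ * w) * (1 + σ * a / w) = (k - 1) * a := by
    field_simp
    linear_combination -σ * hw2 - a * w * hσ2
  have hright : c + τ * v = c * (1 + τ * a / v) := by
    field_simp
    linear_combination τ * hv2
  rw [mul_div_assoc', eq_div_iff (by linarith), mul_assoc (_ + _), hleft, hright]
  ring

theorem isLogOfQuotient (hT : IsRegularTriple k a r c s) (h : IsBiquadraticUnitPair r s x y)
    (hx : 0 < x) (hy : 0 < y) (hσ : |σ| = 1) (hτ : |τ| = 1) :
    IsLogOfQuotient h (quotientNumerator k a r c s σ τ) ((k - 1) * c * a).toNat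
      (leadingLog a σ τ x y) (3 * x) := by
  have hexp := hT.four_mul_c_mul_le_exp hx h.two_mul_cosh_left
  have ha := hT.le_a
  have hc : 0 < c := by linarith [hT.le_c]
  have hk := hT.seven_le
  have hpos : 0 < (k - 1) * c * a := mul_pos (mul_pos (by linarith) hc) (by linarith)
  have hcast : ((((k - 1) * c * a).toNat : ℕ) : ℝ) = (k - 1) * c * a := by
    exact_mod_cast Int.toNat_of_nonneg hpos.le
  have hle : (k - 1) * c * a ≤ 4 * (c * (k * a)) := by
    nlinarith [mul_pos hc (show 0 < a by linarith)]
  refine ⟨by omega, ?_, ?_, ?_, ?_, ?_⟩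
  · rw [hcast, hT.eval_quotientNumerator_eq h hx hy hσ hτ]
  · rw [hcast]
    exact le_trans (by exact_mod_cast hle) hexp
  all_goals exact (hT.abs_eval_quotientNumerator_le _ hσ hτ).trans hexp

theorem abs_linear_form_leadingLog_le (hT : IsRegularTriple k a r c s)
    (h : IsBiquadraticUnitPair r s x y) (hx : 0 < x) (hy : 0 < y) (hσ : |σ| = 1) (hτ : |τ| = 1)
    (hP0 : P 0 = 2) (hP1 : P 1 = r + σ * a) (hP : ∀ i, P (i + 2) = r * P (i + 1) - P i)
    (hQ0 : Q 0 = 2) (hQ1 : Q 1 = s + τ * a) (hQ : ∀ i, Q (i + 2) = s * Q (i + 1) - Q i)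
    (hl : 1 ≤ l) (hm : 1 ≤ m) (heq : Q m = P l) :
    |l * x - m * y + leadingLog a σ τ x y| ≤ Real.exp (-(2 * l - 1) * x) := by
  have hxr := h.two_mul_cosh_left
  have hys := h.two_mul_cosh_right
  have hx10 := hT.ten_le_left hx hxr
  refine abs_linear_form_le hx10 (by linarith [hT.left_le_two_mul_right hy h])
    (hT.abs_div_two_mul_sinh_left_le hx hxr hσ) (hT.abs_div_two_mul_sinh_right_le hy hys hτ) hl hm
    ?_
  have hsx : 2 * Real.sinh x ≠ 0 := (mul_pos two_pos (Real.sinh_pos_iff.2 hx)).ne'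
  have hsy : 2 * Real.sinh y ≠ 0 := (mul_pos two_pos (Real.sinh_pos_iff.2 hy)).ne'
  rw [← eq_mul_exp_add_mul_exp_neg_of_recurrence (P := fun i => P i) (by simp [hP0])
      (by simp [hP1, hxr, hsx]) (fun i => by simp [hP, hxr]),
    ← eq_mul_exp_add_mul_exp_neg_of_recurrence (P := fun i => Q i) (by simp [hQ0])
      (by simp [hQ1, hys, hsy]) (fun i => by simp [hQ, hys]), heq]

theorem le_two_mul_add_one (hT : IsRegularTriple k a r c s) (h : IsBiquadraticUnitPair r s x y)
    (hx : 0 < x) (hy : 0 < y) (hσ : |σ| = 1) (hτ : |τ| = 1) (hl : 1 ≤ l)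
    (hδ : |l * x - m * y + leadingLog a σ τ x y| ≤ Real.exp (-(2 * l - 1) * x)) :
    m ≤ 2 * l + 1 := by
  have hx10 := hT.ten_le_left hx h.two_mul_cosh_left
  have hκ := (abs_le.1 (hT.abs_leadingLog_le h hx hy hσ hτ)).2
  have hl' : (1 : ℝ) ≤ l := by exact_mod_cast hl
  have hform := (abs_le.1 (hδ.trans (Real.exp_le_one_iff.2 (by nlinarith)))).1
  have hmx : (m : ℝ) * x ≤ m * (2 * y) := by gcongr; exact hT.left_le_two_mul_right hy h
  have hmul : (m : ℝ) * x ≤ (2 * l + 1) * x := by linarith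
  exact_mod_cast le_of_mul_le_mul_right hmul hx

end IsRegularTriple

theorem div_log_lt_of_lt_ceil {l m : ℕ} {x Y : ℝ} (hx : 10 ≤ x) (hxY : x + 1 ≤ Y)
    (hl : l < 2 * 10 ^ 15 * ⌈x⌉₊ ^ 2) (hm : 1 ≤ m) (hml : m ≤ 2 * l + 1) :
    m / Real.log (Real.exp 1 * m) < 1.336 * 10 ^ 14 * Y ^ 2 := by
  have hm1 : (1 : ℝ) ≤ m := by exact_mod_cast hm
  have hlog0 : 0 ≤ Real.log m := Real.log_nonneg hm1
  rw [Real.log_mul (Real.exp_ne_zero 1) (by linarith), Real.log_exp, div_lt_iff₀ (by linarith)]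
  by_contra! hcon
  have hY : 121 ≤ Y ^ 2 := by nlinarith
  have hm16 : 1.336 * 10 ^ 16 ≤ (m : ℝ) :=
    calc (1.336 * 10 ^ 16 : ℝ) ≤ 1.336 * 10 ^ 14 * 121 * (1 + 0) := by norm_num
      _ ≤ 1.336 * 10 ^ 14 * Y ^ 2 * (1 + Real.log m) := by gcongr
      _ ≤ m := hcon
  have hlog : 34 ≤ Real.log m := by
    rw [Real.le_log_iff_exp_le (by linarith)]
    calc Real.exp 34 = Real.exp 1 ^ 34 := by rw [← Real.exp_nat_mul]; norm_num
      _ ≤ 2.719 ^ 34 := by gcongr; linarith [Real.exp_one_lt_d9]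
      _ ≤ 1.336 * 10 ^ 16 := by norm_num
      _ ≤ m := hm16
  have hmY : 1.336 * 10 ^ 14 * Y ^ 2 * 35 ≤ m :=
    calc 1.336 * 10 ^ 14 * Y ^ 2 * 35 ≤ 1.336 * 10 ^ 14 * Y ^ 2 * (1 + Real.log m) := by
          gcongr; linarith
      _ ≤ (m : ℝ) := hcon
  have hceil : (⌈x⌉₊ : ℝ) ^ 2 ≤ Y ^ 2 := by
    gcongr
    linarith [Nat.ceil_lt_add_one (show 0 ≤ x by linarith)]
  have hl' : (l : ℝ) < 2 * 10 ^ 15 * ⌈x⌉₊ ^ 2 := by exact_mod_cast hl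
  have hml' : (m : ℝ) ≤ 2 * l + 1 := by exact_mod_cast hml
  linarith

/-- For `k ∈ {7,8,10,11,12,13}`, `a ≥ 10864`, `b = ka`, `c = c₁⁻ = a + b − 2r`, `s = r − a`,
with a solution of Type 1: if `Q_m = P_l` with `l ≥ 1` and `m ≥ 1`, then
`m / log(e·m) < 1.336·10¹⁴ · (log(21.3·a))²`. -/
theorem matveev_upper_bound_c1_minus
    (k a r b c s : ℤ)
    (hk : k ∈ ({7, 8, 10, 11, 12, 13} : Set ℤ)) (ha : 0 < a) (ha2 : 10864 ≤ a)
    (hr : 0 < r) (hr2 : k * a ^ 2 + 4 = r ^ 2) (hb : b = k * a)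
    (hc : c = a + b - 2 * r) (hs : s = r - a) (hac : a < c) (hcb : c < b)
    (x₂ y₂ x₀ z₀ : ℤ)
    (hx₂ : x₂ = 2) (hy₂ : y₂ = 2 ∨ y₂ = -2) (hx₀ : x₀ = 2) (hz₀ : z₀ = 2 ∨ z₀ = -2)
    (P Q : ℕ → ℤ)
    (hP0 : P 0 = x₂) (hP1 : 2 * P 1 = r * x₂ + a * y₂)
    (hPrec : ∀ i : ℕ, P (i + 2) = r * P (i + 1) - P i)
    (hQ0 : Q 0 = x₀) (hQ1 : 2 * Q 1 = s * x₀ + a * z₀)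
    (hQrec : ∀ i : ℕ, Q (i + 2) = s * Q (i + 1) - Q i)
    (l m : ℕ) (hl : 1 ≤ l) (hm : 1 ≤ m) (heq : Q m = P l) :
    (m : ℝ) / Real.log (Real.exp 1 * (m : ℝ)) <
      1.336 * 10 ^ 14 * (Real.log (21.3 * (a : ℝ))) ^ 2 := by
  subst hb hx₂ hx₀
  simp only [Set.mem_insert_iff, Set.mem_singleton_iff] at hk
  have hT : IsRegularTriple k a r c s := ⟨by omega, by omega, ha2, hr, hr2, hc, hs⟩
  have exists_sign {z : ℤ} (hz : z = 2 ∨ z = -2) : ∃ σ : ℤ, |σ| = 1 ∧ z = 2 * σ := by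
    rcases hz with rfl | rfl
    exacts [⟨1, by norm_num⟩, ⟨-1, by norm_num⟩]
  obtain ⟨σ, hσ, rfl⟩ := exists_sign hy₂
  obtain ⟨τ, hτ, rfl⟩ := exists_sign hz₀
  obtain ⟨x, y, hx, hy, h⟩ := hT.exists_isBiquadraticUnitPair
  have hx10 := hT.ten_le_left hx h.two_mul_cosh_left
  have hδ := hT.abs_linear_form_leadingLog_le h hx hy hσ hτ hP0 (by linarith) hPrec hQ0
    (by linarith) hQrec hl hm heq
  have hlt : l < 2 * 10 ^ 15 * ⌈x⌉₊ ^ 2 :=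
    lt_of_abs_linear_form_le hx10 hy (hT.right_le_left hx hy h)
      (hT.isLogOfQuotient h hx hy hσ hτ)
      ((hT.abs_leadingLog_le h hx hy hσ hτ).trans (by linarith)) hδ
  exact div_log_lt_of_lt_ceil hx10 (hT.left_add_one_le_log h.two_mul_cosh_left) hlt hm
    (hT.le_two_mul_add_one h hx hy hσ hτ hl hδ)
end

section
/- Let k ∈ {7, 8, 10, 11, 12, 13} and let a be a positive integer with k·a² + 4 = r² a perfect square and b = ka > 10⁵. Let c = (a²b² + 6ab + 9)(a + b ± 2r) ∓ 4r(ab + 3) for one fixed choice of sign (c = c₃^±), and let s, t be the positive integers with ac + 4 = s² and bc + 4 = t². (i) If z₀ = z₁ ∈ {2, −2} and x₀ = y₁ = 2, and v_{2m} = w_{2n} for some integers m and n with n > 2, then m > 0.495·b^{−1/2}·c^{1/2}. (ii) If z₀ = ε·t and z₁ = ε·s for some ε ∈ {+1, −1} and x₀ = y₁ = r, and v_{2m+1} = w_{2n+1} for some integers m and n with n > 2, then m² > 0.0625·b^{−1}·c^{1/2}. -/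
/-!
Write `M = m (m + 1)` and `N = n (n + 1)`. Modulo `c²` the terms of even index, and likewise those
of odd index, of the two sequences are quadratic polynomials in the index. Hence `v₂ₘ = w₂ₙ` and
`v₂ₘ₊₁ = w₂ₙ₊₁` become congruences modulo `c` between quadratic expressions in `m` and `n`, where
`n ≤ m` because `w` grows faster than `v`. If `m` were small, both sides would differ by less than
`c`, so the congruence would be an equality.

* In the even case the equality `ε a m² + s m = ε b n² + t n`, multiplied by `s m + t n`, reads
  `(a m² - b n²) (ε (s m + t n) + c) = 4 (n² - m²)`, and the second factor on the left is too large.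
* In the odd case one multiplies by `s t` first. Since `(s t)² ≡ 16` and `r s t ≡ -g` with
  `g = (a b + 2) c - r s t`, the equality is `4 ε (a M - b N) = g (m - n)`, and `g ≥ c / (a b + 2)`
  is too large.

Of `c = c₃` only the bounds `5 a² b² ≤ c ≤ a⁴ b⁴` matter.
-/

section Recurrence

variable {s t : ℤ} {v w : ℕ → ℤ}

theorem abs_le_succ_of_recurrence (hs : 2 ≤ s) (hv : ∀ i, v (i + 2) = s * v (i + 1) - v i)
    (h01 : |v 0| ≤ v 1) (i : ℕ) : |v i| ≤ v (i + 1) := by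
  induction i with
  | zero => exact h01
  | succ i ih =>
    have hpos : 0 ≤ v (i + 1) := (abs_nonneg _).trans ih
    rw [abs_of_nonneg hpos, hv i]
    nlinarith [le_of_abs_le ih]

theorem lt_succ_of_recurrence (hs : 2 ≤ s) (hst : s + 2 ≤ t)
    (hv : ∀ i, v (i + 2) = s * v (i + 1) - v i) (hw : ∀ i, w (i + 2) = t * w (i + 1) - w i)
    (hv01 : |v 0| ≤ v 1) (hw01 : |w 0| ≤ w 1) (hvw : v 1 < w 2) (i : ℕ) :
    v (i + 1) < w (i + 2) := by
  induction i with
  | zero => exact hvw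
  | succ i ih =>
    have hvi : -v (i + 1) ≤ v i := neg_le_of_abs_le (abs_le_succ_of_recurrence hs hv hv01 i)
    have hwi : |w (i + 1)| ≤ w (i + 2) :=
      abs_le_succ_of_recurrence (by linarith) hw hw01 (i + 1)
    have hwpos : 0 ≤ w (i + 2) := (abs_nonneg _).trans hwi
    calc v (i + 1 + 1) = s * v (i + 1) - v i := hv i
      _ ≤ (s + 1) * v (i + 1) := by linarith
      _ < (s + 1) * w (i + 2) := mul_lt_mul_of_pos_left ih (by linarith)
      _ ≤ (t - 1) * w (i + 2) := mul_le_mul_of_nonneg_right (by linarith) hwpos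
      _ ≤ t * w (i + 2) - w (i + 1) := by linarith [le_of_abs_le hwi]
      _ = w (i + 1 + 2) := (hw (i + 1)).symm

theorem index_le_of_eq_of_recurrence (hs : 2 ≤ s) (hst : s + 2 ≤ t)
    (hv : ∀ i, v (i + 2) = s * v (i + 1) - v i) (hw : ∀ i, w (i + 2) = t * w (i + 1) - w i)
    (hv01 : |v 0| ≤ v 1) (hw01 : |w 0| ≤ w 1) (hvw : v 1 < w 2) {j k : ℕ} (hjk : v j = w k) :
    k ≤ j + 1 := by
  by_contra! hlt
  have hw_mono : Monotone w := monotone_nat_of_le_succ fun i =>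
    le_of_abs_le (abs_le_succ_of_recurrence (by linarith) hw hw01 i)
  refine hjk.not_lt ?_
  calc v j ≤ v (j + 1) := le_of_abs_le (abs_le_succ_of_recurrence hs hv hv01 j)
    _ < w (j + 2) := lt_succ_of_recurrence hs hst hv hw hv01 hw01 hvw j
    _ ≤ w k := hw_mono hlt

end Recurrence

section Congruence

variable {c : ℤ}

theorem eq_of_modEq_of_abs_sub_lt {x y : ℤ} (hxy : x ≡ y [ZMOD c]) (hlt : |x - y| < c) : x = y :=
  sub_eq_zero.mp (Int.eq_zero_of_abs_lt_dvd hxy.symm.dvd hlt)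

theorem modEq_of_add_mul_modEq_sq (hc : c ≠ 0) {z x y : ℤ}
    (h : z + c * x ≡ z + c * y [ZMOD c ^ 2]) : x ≡ y [ZMOD c] := by
  rw [sq] at h
  exact (h.add_left_cancel' z).mul_left_cancel' hc

theorem quadratic_modEq_sq_of_recurrence {a p q l : ℤ} {u : ℕ → ℤ}
    (hu : ∀ m, u (m + 2) = (a * c + 2) * u (m + 1) - u m) (hpq : 2 * q ≡ a * p [ZMOD c])
    (h0 : u 0 ≡ p [ZMOD c ^ 2]) (h1 : u 1 ≡ p + c * (q + l) [ZMOD c ^ 2]) (m : ℕ) :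
    u m ≡ p + c * (q * m ^ 2 + l * m) [ZMOD c ^ 2] := by
  induction m using Nat.twoStepInduction with
  | zero => simpa using h0
  | one => simpa using h1
  | more m ih ih' =>
    obtain ⟨d, hd⟩ := hpq.dvd
    rw [hu]
    refine ((ih'.mul_left (a * c + 2)).sub ih).trans (Int.modEq_iff_dvd.mpr ?_)
    refine ⟨-(d + a * (q * (m + 1) ^ 2 + l * (m + 1))), ?_⟩
    push_cast
    linear_combination -c * hd

end Congruence

/-- The sequence of `z`-coordinates attached to the fundamental solution `(z, x)` of the equation
`a z² - c x² = 4 (a - c)`, where `a c + 4 = s²`. The second term `(s z + c x) / 2` is specified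
without a division. -/
structure IsPellSequence (s c z x : ℤ) (v : ℕ → ℤ) : Prop where
  zero : v 0 = z
  one : 2 * v 1 = s * z + c * x
  recurrence : ∀ i, v (i + 2) = s * v (i + 1) - v i

namespace IsPellSequence

variable {a c s z x : ℤ} {v : ℕ → ℤ}

theorem two_step (hv : IsPellSequence s c z x v) (hs : a * c + 4 = s ^ 2) (i : ℕ) :
    v (i + 4) = (a * c + 2) * v (i + 2) - v i := by
  linear_combination hv.recurrence (i + 2) + s * hv.recurrence (i + 1) + hv.recurrence i -
    v (i + 2) * hs

theorem even_modEq (hv : IsPellSequence s c (2 * z) (2 * x) v) (hs : a * c + 4 = s ^ 2) (m : ℕ) :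
    v (2 * m) ≡ 2 * z + c * (z * a * m ^ 2 + s * x * m) [ZMOD c ^ 2] := by
  refine quadratic_modEq_sq_of_recurrence (u := fun m => v (2 * m))
    (fun m => hv.two_step hs (2 * m)) (Int.modEq_iff_dvd.mpr ⟨0, by ring⟩) ?_ ?_ m
  · simp [hv.zero]
  · have h2 : v 2 = s * v 1 - v 0 := hv.recurrence 0
    have hv2 : v 2 = 2 * z + c * (z * a + s * x) := by
      linarith [hv.zero, congrArg (s * ·) hv.one, congrArg (z * ·) hs]
    simp [hv2]

theorem odd_modEq (hv : IsPellSequence s c z x v) (hs : a * c + 4 = s ^ 2) (m : ℕ) :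
    4 * v (2 * m + 1) ≡
      2 * s * z + c * (s * z * a * (m * (m + 1)) + 2 * x * (2 * m + 1)) [ZMOD c ^ 2] := by
  have hquad := quadratic_modEq_sq_of_recurrence (c := c) (a := a) (p := 2 * s * z + 2 * c * x)
    (q := s * z * a) (l := s * z * a + 4 * x) (u := fun m => 4 * v (2 * m + 1))
    (fun m => by linear_combination 4 * hv.two_step hs (2 * m + 1)) ?_ ?_ ?_ m
  · convert hquad using 1
    ring
  · exact Int.modEq_iff_dvd.mpr ⟨2 * a * x, by ring⟩
  · exact Int.modEq_iff_dvd.mpr ⟨0, by linear_combination -2 * hv.one⟩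
  · have h2 : v 2 = s * v 1 - v 0 := hv.recurrence 0
    have h3 : v 3 = s * v 2 - v 1 := hv.recurrence 1
    refine Int.modEq_iff_dvd.mpr ⟨-(2 * a * x), ?_⟩
    linear_combination -4 * h3 - 4 * s * h2 + 4 * s * hv.zero + 4 * v 1 * hs -
      (2 * a * c + 6) * hv.one

end IsPellSequence

/-- `{a, b, c}` is a D(4)-triple with `a < b < c`, and `r`, `s`, `t` are the positive square roots
of `a b + 4`, `a c + 4`, `b c + 4`. -/
structure IsDFourTriple (a b c r s t : ℤ) : Prop where
  a_pos : 0 < a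
  a_lt_b : a < b
  b_lt_c : b < c
  r_pos : 0 < r
  s_pos : 0 < s
  t_pos : 0 < t
  ab_eq : a * b + 4 = r ^ 2
  ac_eq : a * c + 4 = s ^ 2
  bc_eq : b * c + 4 = t ^ 2

/-- The number `2 (d - a - b)`, where `d = a + b + c + (a b c - r s t) / 2` is the smaller of the
two elements extending the D(4)-triple `{a, b, c}` to a regular D(4)-quadruple. -/
def regularGap (a b c r s t : ℤ) : ℤ := (a * b + 2) * c - r * s * t

namespace IsDFourTriple

variable {a b c r s t : ℤ}

theorem b_pos (h : IsDFourTriple a b c r s t) : 0 < b := h.a_pos.trans h.a_lt_b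

theorem c_pos (h : IsDFourTriple a b c r s t) : 0 < c := h.b_pos.trans h.b_lt_c

theorem two_le_s (h : IsDFourTriple a b c r s t) : 2 ≤ s := by
  refine le_of_pow_le_pow_left₀ two_ne_zero h.s_pos.le ?_
  linarith [h.ac_eq, mul_pos h.a_pos h.c_pos]

theorem s_lt_t (h : IsDFourTriple a b c r s t) : s < t := by
  refine lt_of_pow_lt_pow_left₀ 2 h.t_pos.le ?_
  linarith [h.ac_eq, h.bc_eq, mul_lt_mul_of_pos_right h.a_lt_b h.c_pos]

theorem four_mul_t_le (h : IsDFourTriple a b c r s t) (hbc : 17 * b ≤ c) : 4 * t ≤ c := by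
  have hb2 : 2 ≤ b := by linarith [h.a_pos, h.a_lt_b]
  refine le_of_pow_le_pow_left₀ two_ne_zero h.c_pos.le ?_
  nlinarith [h.bc_eq, mul_le_mul_of_nonneg_right hbc h.c_pos.le,
    mul_le_mul_of_nonneg_right hb2 h.c_pos.le]

theorem s_add_two_le_t (h : IsDFourTriple a b c r s t) (htc : 4 * t ≤ c) : s + 2 ≤ t := by
  have hgap : c ≤ (b - a) * c := le_mul_of_one_le_left h.c_pos.le (by linarith [h.a_lt_b])
  refine le_of_pow_le_pow_left₀ two_ne_zero h.t_pos.le ?_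
  linarith [h.ac_eq, h.bc_eq, h.s_lt_t]

theorem index_le_of_eq (h : IsDFourTriple a b c r s t) (htc : 4 * t ≤ c) {z₀ x₀ z₁ y₁ : ℤ}
    {v w : ℕ → ℤ} (hv : IsPellSequence s c z₀ x₀ v) (hw : IsPellSequence t c z₁ y₁ w)
    (hv01 : |z₀| ≤ v 1) (hw01 : |z₁| ≤ w 1) (hvw : v 1 < t * w 1 - z₁) {j k : ℕ}
    (hjk : v j = w k) : k ≤ j + 1 := by
  rw [← hv.zero] at hv01
  rw [← hw.zero] at hw01 hvw
  exact index_le_of_eq_of_recurrence h.two_le_s (h.s_add_two_le_t htc) hv.recurrence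
    hw.recurrence hv01 hw01 (hvw.trans_eq (hw.recurrence 0).symm) hjk

theorem two_hundred_le_ab (h : IsDFourTriple a b c r s t) (hb : 200 ≤ b) : 200 ≤ a * b :=
  hb.trans (le_mul_of_one_le_left h.b_pos.le h.a_pos)

theorem five_mul_a_mul_b_sq_le (h : IsDFourTriple a b c r s t) (hlo : 5 * a ^ 2 * b ^ 2 ≤ c) :
    5 * (a * b) * b ≤ c := by
  have hb := h.b_pos
  calc 5 * (a * b) * b ≤ 5 * (a * b) * (a * b) := by
        gcongr
        · have := h.a_pos
          positivity
        · exact le_mul_of_one_le_left hb.le h.a_pos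
    _ = 5 * a ^ 2 * b ^ 2 := by ring
    _ ≤ c := hlo

theorem seventeen_mul_b_le (h : IsDFourTriple a b c r s t) (hb : 200 ≤ b)
    (hlo : 5 * a ^ 2 * b ^ 2 ≤ c) : 17 * b ≤ c := by
  nlinarith [h.five_mul_a_mul_b_sq_le hlo, h.two_hundred_le_ab hb]

section EvenIndices

variable {ε : ℤ}

theorem even_initial_bounds (h : IsDFourTriple a b c r s t) (htc : 4 * t ≤ c)
    (hε : ε = 1 ∨ ε = -1) :
    |2 * ε| ≤ s * ε + c ∧ |2 * ε| ≤ t * ε + c ∧ s * ε + c < t * (t * ε + c) - 2 * ε := by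
  have hs := h.two_le_s
  have hst := h.s_add_two_le_t htc
  have htt : t * (4 * t) ≤ t * c := mul_le_mul_of_nonneg_left htc h.t_pos.le
  have hcc : 4 * c ≤ t * c := mul_le_mul_of_nonneg_right (by linarith) h.c_pos.le
  have ht2 : 0 < t * t := mul_pos h.t_pos h.t_pos
  refine ⟨abs_le.mpr ?_, abs_le.mpr ?_, ?_⟩
  · rcases hε with rfl | rfl <;> constructor <;> linarith
  · rcases hε with rfl | rfl <;> constructor <;> linarith
  · rcases hε with rfl | rfl <;> linarith

theorem index_le_of_even_eq (h : IsDFourTriple a b c r s t) (htc : 4 * t ≤ c)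
    (hε : ε = 1 ∨ ε = -1) {v w : ℕ → ℤ} (hv : IsPellSequence s c (2 * ε) 2 v)
    (hw : IsPellSequence t c (2 * ε) 2 w) {m n : ℕ} (hmn : v (2 * m) = w (2 * n)) : n ≤ m := by
  have hv1 : v 1 = s * ε + c := by linarith [hv.one]
  have hw1 : w 1 = t * ε + c := by linarith [hw.one]
  obtain ⟨hv01, hw01, hvw⟩ := h.even_initial_bounds htc hε
  rw [← hv1] at hv01 hvw
  rw [← hw1] at hw01 hvw
  have := h.index_le_of_eq htc hv hw hv01 hw01 hvw hmn
  lia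

theorem even_modEq_of_eq (h : IsDFourTriple a b c r s t) {v w : ℕ → ℤ}
    (hv : IsPellSequence s c (2 * ε) 2 v) (hw : IsPellSequence t c (2 * ε) 2 w) {m n : ℕ}
    (hmn : v (2 * m) = w (2 * n)) :
    ε * a * m ^ 2 + s * m ≡ ε * b * n ^ 2 + t * n [ZMOD c] := by
  have hvm := IsPellSequence.even_modEq (x := 1) hv h.ac_eq m
  have hwn := IsPellSequence.even_modEq (x := 1) hw h.bc_eq n
  rw [mul_one] at hvm hwn
  exact modEq_of_add_mul_modEq_sq h.c_pos.ne' (hvm.symm.trans (hmn ▸ hwn))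

-- `245025 / 10⁶ = 0.495²`; since `0.495 < 0.4975 < 1 / 2`, this will force `s m + t n < c`.
theorem t_mul_le_of_small (h : IsDFourTriple a b c r s t) {m : ℤ} (hb : 200 ≤ b)
    (hm : 10 ^ 6 * (b * m ^ 2) ≤ 245025 * c) : 2000 * (t * m) ≤ 995 * c := by
  have hc : 200 < c := hb.trans_lt h.b_lt_c
  have hmb : 200 * m ^ 2 ≤ b * m ^ 2 := mul_le_mul_of_nonneg_right hb (sq_nonneg m)
  refine le_of_pow_le_pow_left₀ two_ne_zero (by linarith) ?_
  calc (2000 * (t * m)) ^ 2 = 4 * (10 ^ 6 * (b * m ^ 2) * c) + 16 * 10 ^ 6 * m ^ 2 := by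
        linear_combination -4 * 10 ^ 6 * m ^ 2 * h.bc_eq
    _ ≤ 4 * (245025 * c * c) + 19602 * c := by
        gcongr ?_ + ?_
        · gcongr
        · linarith
    _ ≤ (995 * c) ^ 2 := by nlinarith

theorem even_equation_of_modEq (h : IsDFourTriple a b c r s t) {m n : ℤ} (hb : 200 ≤ b)
    (hε : ε = 1 ∨ ε = -1) (hn : 0 ≤ n) (hnm : n ≤ m)
    (hmod : ε * a * m ^ 2 + s * m ≡ ε * b * n ^ 2 + t * n [ZMOD c])
    (hm : 10 ^ 6 * (b * m ^ 2) ≤ 245025 * c) :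
    ε * a * m ^ 2 + s * m = ε * b * n ^ 2 + t * n := by
  have htm := h.t_mul_le_of_small hb hm
  have hm0 : 0 ≤ m := hn.trans hnm
  have hsm : s * m ≤ t * m := mul_le_mul_of_nonneg_right h.s_lt_t.le hm0
  have htn : t * n ≤ t * m := mul_le_mul_of_nonneg_left hnm h.t_pos.le
  have ham : a * m ^ 2 ≤ b * m ^ 2 := mul_le_mul_of_nonneg_right h.a_lt_b.le (sq_nonneg m)
  have hbn : b * n ^ 2 ≤ b * m ^ 2 :=
    mul_le_mul_of_nonneg_left (pow_le_pow_left₀ hn hnm 2) h.b_pos.le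
  have hsm0 : 0 ≤ s * m := mul_nonneg h.s_pos.le hm0
  have htn0 : 0 ≤ t * n := mul_nonneg h.t_pos.le hn
  have ham0 : 0 ≤ a * m ^ 2 := mul_nonneg h.a_pos.le (sq_nonneg m)
  have hbn0 : 0 ≤ b * n ^ 2 := mul_nonneg h.b_pos.le (sq_nonneg n)
  have hc := h.c_pos
  refine eq_of_modEq_of_abs_sub_lt hmod (abs_lt.mpr ?_)
  rcases hε with rfl | rfl <;> constructor <;> linarith

theorem even_conjugate_identity (h : IsDFourTriple a b c r s t) {m n : ℤ}
    (heq : ε * a * m ^ 2 + s * m = ε * b * n ^ 2 + t * n) :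
    (a * m ^ 2 - b * n ^ 2) * (ε * (s * m + t * n) + c) = 4 * (n ^ 2 - m ^ 2) := by
  have hconj : (s * m + t * n) * (s * m - t * n) = s ^ 2 * m ^ 2 - t ^ 2 * n ^ 2 := by ring
  rw [← h.ac_eq, ← h.bc_eq] at hconj
  linear_combination (s * m + t * n) * heq - hconj

theorem even_equation_ne (h : IsDFourTriple a b c r s t) {m n : ℤ} (hb : 200 ≤ b)
    (hε : ε = 1 ∨ ε = -1) (hn : 0 < n) (hnm : n ≤ m)
    (hm : 10 ^ 6 * (b * m ^ 2) ≤ 245025 * c) :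
    ε * a * m ^ 2 + s * m ≠ ε * b * n ^ 2 + t * n := by
  intro heq
  have hm0 : 0 < m := hn.trans_le hnm
  have hm2 : 0 < m ^ 2 := pow_pos hm0 2
  have hkey := h.even_conjugate_identity heq
  have hfactor : 4 * m ^ 2 < ε * (s * m + t * n) + c := by
    have htm := h.t_mul_le_of_small hb hm
    have hsm : s * m ≤ t * m := mul_le_mul_of_nonneg_right h.s_lt_t.le hm0.le
    have htn : t * n ≤ t * m := mul_le_mul_of_nonneg_left hnm h.t_pos.le
    have hsm0 : 0 < s * m := mul_pos h.s_pos hm0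
    have htn0 : 0 < t * n := mul_pos h.t_pos hn
    have hmb : 200 * m ^ 2 ≤ b * m ^ 2 := mul_le_mul_of_nonneg_right hb hm2.le
    rcases hε with rfl | rfl <;> linarith
  have hn2 : 0 < n ^ 2 := pow_pos hn 2
  have hnm2 : n ^ 2 ≤ m ^ 2 := pow_le_pow_left₀ hn.le hnm 2
  rcases lt_trichotomy (a * m ^ 2 - b * n ^ 2) 0 with hneg | hzero | hpos
  · nlinarith
  · rw [hzero, zero_mul] at hkey
    have hsq : n ^ 2 = m ^ 2 := by linarith
    rw [hsq] at hzero
    linarith [mul_lt_mul_of_pos_right h.a_lt_b hm2]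
  · nlinarith

theorem lt_of_even_eq (h : IsDFourTriple a b c r s t) (hb : 200 ≤ b) (hbc : 17 * b ≤ c)
    (hε : ε = 1 ∨ ε = -1) {v w : ℕ → ℤ} (hv : IsPellSequence s c (2 * ε) 2 v)
    (hw : IsPellSequence t c (2 * ε) 2 w) {m n : ℕ} (hn : 0 < n) (hmn : v (2 * m) = w (2 * n)) :
    245025 * c < 10 ^ 6 * (b * m ^ 2) := by
  by_contra! hm
  have hnm : (n : ℤ) ≤ m := by
    exact_mod_cast h.index_le_of_even_eq (h.four_mul_t_le hbc) hε hv hw hmn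
  have hn' : (0 : ℤ) < n := by exact_mod_cast hn
  exact h.even_equation_ne hb hε hn' hnm hm <|
    h.even_equation_of_modEq hb hε hn'.le hnm (h.even_modEq_of_eq hv hw hmn) hm

end EvenIndices

section OddIndices

variable {ε : ℤ}

theorem regularGap_mul_conjugate (h : IsDFourTriple a b c r s t) :
    regularGap a b c r s t * ((a * b + 2) * c + r * s * t) =
      4 * c ^ 2 - 4 * (a * b + 4) * ((a + b) * c + 4) := by
  have hrst : (r * s * t) ^ 2 = (a * b + 4) * (a * c + 4) * (b * c + 4) := by
    rw [h.ab_eq, h.ac_eq, h.bc_eq]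
    ring
  rw [regularGap]
  linear_combination -hrst

theorem two_mul_c_sq_le_regularGap_mul (h : IsDFourTriple a b c r s t) (hb : 200 ≤ b)
    (hlo : 5 * a ^ 2 * b ^ 2 ≤ c) :
    2 * c ^ 2 ≤ regularGap a b c r s t * ((a * b + 2) * c + r * s * t) := by
  have hab := h.two_hundred_le_ab hb
  have hsum : (a + b) * c + 4 ≤ 2 * b * c := by nlinarith [h.a_lt_b, h.b_lt_c]
  have hab_le : 4 * (a * b + 4) * b ≤ c := by nlinarith [h.five_mul_a_mul_b_sq_le hlo]
  have hsmall : 2 * (a * b + 4) * ((a + b) * c + 4) ≤ c ^ 2 := calc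
    2 * (a * b + 4) * ((a + b) * c + 4) ≤ 2 * (a * b + 4) * (2 * b * c) := by gcongr
    _ = 4 * (a * b + 4) * b * c := by ring
    _ ≤ c * c := mul_le_mul_of_nonneg_right hab_le h.c_pos.le
    _ = c ^ 2 := (sq c).symm
  linarith [h.regularGap_mul_conjugate]

theorem rst_pos (h : IsDFourTriple a b c r s t) : 0 < r * s * t :=
  mul_pos (mul_pos h.r_pos h.s_pos) h.t_pos

theorem regularGap_pos (h : IsDFourTriple a b c r s t) (hb : 200 ≤ b)
    (hlo : 5 * a ^ 2 * b ^ 2 ≤ c) : 0 < regularGap a b c r s t := by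
  have hc := h.c_pos
  have hab := h.two_hundred_le_ab hb
  have hrst := h.rst_pos
  refine pos_of_mul_pos_left (lt_of_lt_of_le ?_ (h.two_mul_c_sq_le_regularGap_mul hb hlo)) ?_ <;>
    positivity

theorem c_le_mul_regularGap (h : IsDFourTriple a b c r s t) (hb : 200 ≤ b)
    (hlo : 5 * a ^ 2 * b ^ 2 ≤ c) : c ≤ (a * b + 2) * regularGap a b c r s t := by
  have hgap := h.regularGap_pos hb hlo
  have hrst_le : r * s * t ≤ (a * b + 2) * c := sub_nonneg.mp hgap.le
  refine le_of_mul_le_mul_left (a := 2 * c) ?_ (by linarith [h.c_pos])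
  calc 2 * c * c = 2 * c ^ 2 := by ring
    _ ≤ regularGap a b c r s t * ((a * b + 2) * c + r * s * t) :=
        h.two_mul_c_sq_le_regularGap_mul hb hlo
    _ ≤ regularGap a b c r s t * ((a * b + 2) * c + (a * b + 2) * c) := by gcongr
    _ = 2 * c * ((a * b + 2) * regularGap a b c r s t) := by ring

theorem mul_regularGap_le (h : IsDFourTriple a b c r s t) (hb : 200 ≤ b)
    (hlo : 5 * a ^ 2 * b ^ 2 ≤ c) : (a * b + 2) * regularGap a b c r s t ≤ 4 * c := by
  have hgap := h.regularGap_pos hb hlo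
  have hab := h.two_hundred_le_ab hb
  have hsum : 0 < (a + b) * c + 4 := by
    linarith [mul_pos (add_pos h.a_pos h.b_pos) h.c_pos]
  refine le_of_mul_le_mul_left (a := c) ?_ h.c_pos
  calc c * ((a * b + 2) * regularGap a b c r s t)
      ≤ regularGap a b c r s t * ((a * b + 2) * c + r * s * t) := by
        linarith [mul_pos hgap h.rst_pos]
    _ = 4 * c ^ 2 - 4 * (a * b + 4) * ((a + b) * c + 4) := h.regularGap_mul_conjugate
    _ ≤ c * (4 * c) := by
        linarith [mul_pos (by linarith : 0 < a * b + 4) hsum]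

theorem two_mul_t_le (h : IsDFourTriple a b c r s t) (hb : 200 ≤ b)
    (hlo : 5 * a ^ 2 * b ^ 2 ≤ c) : 2 * t ≤ c * r - s * t := by
  have hc := h.c_pos
  have hab := h.two_hundred_le_ab hb
  have hrt : r * t ≤ c := by
    refine le_of_pow_le_pow_left₀ two_ne_zero hc.le ?_
    rw [mul_pow, ← h.ab_eq, ← h.bc_eq]
    nlinarith [mul_le_mul_of_nonneg_right (h.five_mul_a_mul_b_sq_le hlo) hc.le]
  refine le_of_mul_le_mul_left (a := r) ?_ h.r_pos
  calc r * (2 * t) ≤ 2 * c + regularGap a b c r s t := by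
        linarith [h.regularGap_pos hb hlo]
    _ = r * (c * r - s * t) := by
        rw [regularGap]
        linear_combination c * h.ab_eq

theorem index_le_of_odd_eq (h : IsDFourTriple a b c r s t) (hb : 200 ≤ b)
    (hlo : 5 * a ^ 2 * b ^ 2 ≤ c) (hε : ε = 1 ∨ ε = -1) {v w : ℕ → ℤ}
    (hv : IsPellSequence s c (ε * t) r v) (hw : IsPellSequence t c (ε * s) r w) {m n : ℕ}
    (hmn : v (2 * m + 1) = w (2 * n + 1)) : n ≤ m := by
  have hs := h.two_le_s
  have hst := h.s_lt_t
  have hstpos : 0 < s * t := mul_pos h.s_pos h.t_pos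
  have hvw1 : v 1 = w 1 := by linarith [hv.one, hw.one]
  have htv : t ≤ v 1 := by
    have := h.two_mul_t_le hb hlo
    have := hv.one
    rcases hε with rfl | rfl <;> linarith
  have htv' : 3 * v 1 ≤ t * v 1 := mul_le_mul_of_nonneg_right (by linarith) (by linarith)
  have hv01 : |ε * t| ≤ v 1 := by
    rcases hε with rfl | rfl <;> rw [abs_le] <;> constructor <;> linarith
  have hw01 : |ε * s| ≤ w 1 := by
    rcases hε with rfl | rfl <;> rw [abs_le] <;> constructor <;> linarith
  have hvw : v 1 < t * w 1 - ε * s := by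
    rw [← hvw1]
    rcases hε with rfl | rfl <;> linarith
  have := h.index_le_of_eq (h.four_mul_t_le (h.seventeen_mul_b_le hb hlo)) hv hw hv01 hw01 hvw hmn
  lia

theorem odd_modEq_of_eq (h : IsDFourTriple a b c r s t) {v w : ℕ → ℤ}
    (hv : IsPellSequence s c (ε * t) r v) (hw : IsPellSequence t c (ε * s) r w) {m n : ℕ}
    (hmn : v (2 * m + 1) = w (2 * n + 1)) :
    16 * (ε * (a * (m * (m + 1)) - b * (n * (n + 1)))) ≡
      4 * (regularGap a b c r s t * (m - n)) [ZMOD c] := by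
  have hvm := hv.odd_modEq h.ac_eq m
  have hwn := hw.odd_modEq h.bc_eq n
  rw [hmn, show 2 * s * (ε * t) = 2 * t * (ε * s) by ring] at hvm
  obtain ⟨q, hq⟩ := (modEq_of_add_mul_modEq_sq h.c_pos.ne' (hvm.symm.trans hwn)).dvd
  have hst : (s * t) ^ 2 = 16 + c * (a * b * c + 4 * (a + b)) := by
    rw [mul_pow, ← h.ac_eq, ← h.bc_eq]
    ring
  refine Int.modEq_iff_dvd.mpr ⟨s * t * q + 4 * (a * b + 2) * (m - n) +
    ε * (a * (m * (m + 1)) - b * (n * (n + 1))) * (a * b * c + 4 * (a + b)), ?_⟩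
  rw [regularGap]
  linear_combination s * t * hq + ε * (a * (m * (m + 1)) - b * (n * (n + 1))) * hst

theorem abs_odd_difference_le (h : IsDFourTriple a b c r s t) {m n : ℤ} (hn : 0 < n)
    (hnm : n ≤ m) :
    |a * (m * (m + 1)) - b * (n * (n + 1))| ≤ 2 * (b * m ^ 2) := by
  have ha := h.a_pos
  have hb := h.b_pos
  have hm : 0 < m := hn.trans_le hnm
  have ham : a * (m * (m + 1)) ≤ b * (m * (m + 1)) := by gcongr; exact h.a_lt_b.le
  have hbn : b * (n * (n + 1)) ≤ b * (m * (m + 1)) := by gcongr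
  have hbm : b * (m * (m + 1)) ≤ b * (2 * m ^ 2) := mul_le_mul_of_nonneg_left (by nlinarith) hb.le
  have ham0 : 0 < a * (m * (m + 1)) := by positivity
  have hbn0 : 0 < b * (n * (n + 1)) := by positivity
  exact abs_le.mpr ⟨by linarith, by linarith⟩

theorem thirty_two_mul_index_le (h : IsDFourTriple a b c r s t) {m : ℤ} (hb : 200 ≤ b)
    (hhi : c ≤ a ^ 4 * b ^ 4) (hm : 256 * (b * m ^ 2) ^ 2 ≤ c) : 32 * m ≤ a * b := by
  have hab := h.two_hundred_le_ab hb
  refine le_of_pow_le_pow_left₀ four_ne_zero (by linarith) ?_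
  have hb2 : 4096 ≤ b ^ 2 := by nlinarith
  refine le_of_mul_le_mul_left (a := b ^ 2) ?_ (by linarith)
  calc b ^ 2 * (32 * m) ^ 4 = 4096 * (256 * (b * m ^ 2) ^ 2) := by ring
    _ ≤ 4096 * (a ^ 4 * b ^ 4) :=
        mul_le_mul_of_nonneg_left (hm.trans hhi) (by norm_num)
    _ ≤ b ^ 2 * (a ^ 4 * b ^ 4) := by gcongr
    _ = b ^ 2 * (a * b) ^ 4 := by ring

theorem odd_equation_of_modEq (h : IsDFourTriple a b c r s t) {m n : ℤ} (hb : 200 ≤ b)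
    (hlo : 5 * a ^ 2 * b ^ 2 ≤ c) (hhi : c ≤ a ^ 4 * b ^ 4) (hε : ε = 1 ∨ ε = -1)
    (hn : 0 < n) (hnm : n ≤ m)
    (hmod : 16 * (ε * (a * (m * (m + 1)) - b * (n * (n + 1)))) ≡
      4 * (regularGap a b c r s t * (m - n)) [ZMOD c])
    (hm : 256 * (b * m ^ 2) ^ 2 ≤ c) :
    16 * (ε * (a * (m * (m + 1)) - b * (n * (n + 1)))) =
      4 * (regularGap a b c r s t * (m - n)) := by
  have hc : 200 < c := hb.trans_lt h.b_lt_c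
  have hgap := h.regularGap_pos hb hlo
  have hquad : 128 * (b * m ^ 2) ≤ c := by
    refine le_of_pow_le_pow_left₀ two_ne_zero (by linarith) ?_
    nlinarith
  have hdiff := abs_le.mp (h.abs_odd_difference_le hn hnm)
  have hlin : 8 * (regularGap a b c r s t * (m - n)) ≤ c := by
    have hm_le := h.thirty_two_mul_index_le hb hhi hm
    nlinarith [h.mul_regularGap_le hb hlo, mul_le_mul_of_nonneg_left hm_le hgap.le,
      mul_pos hgap hn]
  have hlin0 : 0 ≤ regularGap a b c r s t * (m - n) :=
    mul_nonneg hgap.le (sub_nonneg.mpr hnm)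
  refine eq_of_modEq_of_abs_sub_lt hmod (abs_lt.mpr ?_)
  rcases hε with rfl | rfl <;> constructor <;> linarith

theorem odd_equation_ne (h : IsDFourTriple a b c r s t) {m n : ℤ} (hb : 200 ≤ b)
    (hlo : 5 * a ^ 2 * b ^ 2 ≤ c) (hε : ε = 1 ∨ ε = -1) (hn : 0 < n) (hnm : n ≤ m)
    (hm : 256 * (b * m ^ 2) ^ 2 ≤ c) :
    16 * (ε * (a * (m * (m + 1)) - b * (n * (n + 1)))) ≠
      4 * (regularGap a b c r s t * (m - n)) := by
  intro heq
  have hc := h.c_pos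
  have hab := h.two_hundred_le_ab hb
  have hgap := h.regularGap_pos hb hlo
  have hdiff := abs_le.mp (h.abs_odd_difference_le hn hnm)
  rcases hnm.eq_or_lt with rfl | hlt
  · have hnn : 0 < n * (n + 1) := by positivity
    have := mul_lt_mul_of_pos_right h.a_lt_b hnn
    rcases hε with rfl | rfl <;> linarith
  have hgap_le : regularGap a b c r s t ≤ 8 * (b * m ^ 2) := by
    have : regularGap a b c r s t ≤ regularGap a b c r s t * (m - n) :=
      le_mul_of_one_le_right hgap.le (by linarith)
    rcases hε with rfl | rfl <;> linarith
  have hc_sq : c * (4 * c) ≤ c * (a * b + 2) ^ 2 := calc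
    c * (4 * c) = 4 * c ^ 2 := by ring
    _ ≤ 4 * ((a * b + 2) * (8 * (b * m ^ 2))) ^ 2 := by
        gcongr
        exact (h.c_le_mul_regularGap hb hlo).trans (by gcongr)
    _ = 256 * (b * m ^ 2) ^ 2 * (a * b + 2) ^ 2 := by ring
    _ ≤ c * (a * b + 2) ^ 2 := by gcongr
  nlinarith [le_of_mul_le_mul_left hc_sq hc]

theorem lt_of_odd_eq (h : IsDFourTriple a b c r s t) (hb : 200 ≤ b)
    (hlo : 5 * a ^ 2 * b ^ 2 ≤ c) (hhi : c ≤ a ^ 4 * b ^ 4) (hε : ε = 1 ∨ ε = -1) {v w : ℕ → ℤ}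
    (hv : IsPellSequence s c (ε * t) r v) (hw : IsPellSequence t c (ε * s) r w) {m n : ℕ}
    (hn : 0 < n) (hmn : v (2 * m + 1) = w (2 * n + 1)) :
    c < 256 * (b * m ^ 2) ^ 2 := by
  by_contra! hm
  have hnm : (n : ℤ) ≤ m := by exact_mod_cast h.index_le_of_odd_eq hb hlo hε hv hw hmn
  have hn' : (0 : ℤ) < n := by exact_mod_cast hn
  exact h.odd_equation_ne hb hlo hε hn' hnm hm <|
    h.odd_equation_of_modEq hb hlo hhi hε hn' hnm (h.odd_modEq_of_eq hv hw hmn) hm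

end OddIndices

end IsDFourTriple

/-- The third element `c₃` of the two families extending the D(4)-pair `{a, b}` with
`a b + 4 = r²`: the paper's `c₃⁺` and `c₃⁻` are the values at `ρ = r` and `ρ = -r`. -/
def cThree (a b ρ : ℤ) : ℤ :=
  (a ^ 2 * b ^ 2 + 6 * a * b + 9) * (a + b + 2 * ρ) - 4 * ρ * (a * b + 3)

section CThree

variable {a b ρ : ℤ}

theorem cThree_eq : cThree a b ρ = (a * b + 3) * ((a * b + 1) * (a + b + 2 * ρ) + 2 * (a + b)) := by
  rw [cThree]
  ring

theorem five_mul_sq_le_cThree (ha : 0 < a) (hb : 0 < b) (he : 5 ≤ a + b + 2 * ρ) :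
    5 * a ^ 2 * b ^ 2 ≤ cThree a b ρ := by
  rw [cThree_eq]
  calc 5 * a ^ 2 * b ^ 2 = a * b * (a * b * 5 + 0) := by ring
    _ ≤ (a * b + 3) * ((a * b + 1) * (a + b + 2 * ρ) + 2 * (a + b)) := by
      gcongr <;> linarith

theorem cThree_le (ha : 0 < a) (hab : a ≤ b) (hb : 200 ≤ b) (hρ : ρ ≤ b) :
    cThree a b ρ ≤ a ^ 4 * b ^ 4 := by
  have hb_le : b ≤ a * b := le_mul_of_one_le_left (by linarith) ha
  rw [cThree_eq]
  calc (a * b + 3) * ((a * b + 1) * (a + b + 2 * ρ) + 2 * (a + b))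
      ≤ (a * b + 3) * ((a * b + 1) * (4 * b) + 4 * b) := by
        refine mul_le_mul_of_nonneg_left (add_le_add ?_ (by linarith)) (by linarith)
        exact mul_le_mul_of_nonneg_left (by linarith) (by linarith)
    _ ≤ (2 * (a * b)) * ((2 * (a * b)) * (4 * (a * b)) + 4 * (a * b)) := by
        gcongr <;> linarith
    _ = (16 * (a * b) + 8) * (a * b) ^ 2 := by ring
    _ ≤ (a * b) ^ 2 * (a * b) ^ 2 := by
        gcongr
        nlinarith
    _ = a ^ 4 * b ^ 4 := by ring

theorem five_le_add_sub_two_mul {r : ℤ} (ha : 0 < a) (hab : 7 * a ≤ b) (hb : 200 ≤ b)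
    (hr : a * b + 4 = r ^ 2) : 5 ≤ a + b - 2 * r := by
  have : 2 * r ≤ a + b - 5 := by
    refine le_of_pow_le_pow_left₀ two_ne_zero (by linarith) ?_
    nlinarith
  linarith

end CThree

theorem mul_sqrt_lt_of_sq_mul_lt_sq {q x y : ℝ} (hx : 0 ≤ x) (hy : 0 ≤ y)
    (h : q ^ 2 * x < y ^ 2) : q * √x < y :=
  lt_of_pow_lt_pow_left₀ 2 hy (by rwa [mul_pow, Real.sq_sqrt hx])

theorem lower_bound_m_c3_general {a b c r s t : ℤ} (h : IsDFourTriple a b c r s t)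
    (hb : 200 ≤ b) (hlo : 5 * a ^ 2 * b ^ 2 ≤ c) (hhi : c ≤ a ^ 4 * b ^ 4)
    {z₀ x₀ z₁ y₁ : ℤ} {v w : ℕ → ℤ} (hv : IsPellSequence s c z₀ x₀ v)
    (hw : IsPellSequence t c z₁ y₁ w) :
    ((z₀ = z₁ ∧ (z₀ = 2 ∨ z₀ = -2) ∧ x₀ = 2 ∧ y₁ = 2) →
      ∀ m n : ℕ, 0 < n → v (2 * m) = w (2 * n) →
        0.495 * √(c : ℝ) / √(b : ℝ) < m) ∧
    ((∃ ε : ℤ, (ε = 1 ∨ ε = -1) ∧ z₀ = ε * t ∧ z₁ = ε * s) ∧ x₀ = r ∧ y₁ = r →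
      ∀ m n : ℕ, 0 < n → v (2 * m + 1) = w (2 * n + 1) →
        0.0625 * √(c : ℝ) / b < (m : ℝ) ^ 2) := by
  have hbR : (0 : ℝ) < b := by exact_mod_cast h.b_pos
  have hcR : (0 : ℝ) ≤ c := by exact_mod_cast h.c_pos.le
  constructor
  · rintro ⟨rfl, hz, rfl, rfl⟩ m n hn hmn
    obtain ⟨ε, hε, rfl⟩ : ∃ ε : ℤ, (ε = 1 ∨ ε = -1) ∧ z₀ = 2 * ε := by
      rcases hz with rfl | rfl
      exacts [⟨1, by simp⟩, ⟨-1, by simp⟩]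
    have hlt : (245025 * c : ℝ) < 10 ^ 6 * (b * m ^ 2) := by
      exact_mod_cast h.lt_of_even_eq hb (h.seventeen_mul_b_le hb hlo) hε hv hw hn hmn
    rw [div_lt_iff₀ (Real.sqrt_pos.mpr hbR)]
    refine mul_sqrt_lt_of_sq_mul_lt_sq hcR (by positivity) ?_
    rw [mul_pow, Real.sq_sqrt hbR.le]
    linarith
  · rintro ⟨⟨ε, hε, rfl, rfl⟩, rfl, rfl⟩ m n hn hmn
    have hlt : (c : ℝ) < 256 * (b * m ^ 2) ^ 2 := by
      exact_mod_cast h.lt_of_odd_eq hb hlo hhi hε hv hw hn hmn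
    rw [div_lt_iff₀ hbR]
    refine mul_sqrt_lt_of_sq_mul_lt_sq hcR (by positivity) ?_
    linarith

/-- For `k ∈ {7,8,10,11,12,13}`, `b = ka > 10⁵` and `c = c₃^±`, with sequences `v, w`
as in the paper:
(i) if `z₀ = z₁ ∈ {2, −2}`, `x₀ = y₁ = 2` and `v_{2m} = w_{2n}` with `n > 2`, then
`m > 0.495·b^{−1/2}·c^{1/2}`;
(ii) if `z₀ = ε·t`, `z₁ = ε·s` for some sign `ε`, `x₀ = y₁ = r` and `v_{2m+1} = w_{2n+1}`
with `n > 2`, then `m² > 0.0625·b^{−1}·c^{1/2}`. -/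
theorem lower_bound_m_c3
    (k a r b c s t : ℤ)
    (hk : k ∈ ({7, 8, 10, 11, 12, 13} : Set ℤ)) (ha : 0 < a) (hr : 0 < r)
    (hr2 : k * a ^ 2 + 4 = r ^ 2) (hb : b = k * a) (hb5 : 10 ^ 5 < b)
    (hc : c = (a ^ 2 * b ^ 2 + 6 * a * b + 9) * (a + b + 2 * r) - 4 * r * (a * b + 3) ∨
          c = (a ^ 2 * b ^ 2 + 6 * a * b + 9) * (a + b - 2 * r) + 4 * r * (a * b + 3))
    (hs : 0 < s) (hs2 : a * c + 4 = s ^ 2) (ht : 0 < t) (ht2 : b * c + 4 = t ^ 2)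
    (z₀ x₀ z₁ y₁ : ℤ)
    (v w : ℕ → ℤ)
    (hv0 : v 0 = z₀) (hv1 : 2 * v 1 = s * z₀ + c * x₀)
    (hvrec : ∀ i : ℕ, v (i + 2) = s * v (i + 1) - v i)
    (hw0 : w 0 = z₁) (hw1 : 2 * w 1 = t * z₁ + c * y₁)
    (hwrec : ∀ i : ℕ, w (i + 2) = t * w (i + 1) - w i) :
    ((z₀ = z₁ ∧ (z₀ = 2 ∨ z₀ = -2) ∧ x₀ = 2 ∧ y₁ = 2) →
      ∀ m n : ℕ, 2 < n → v (2 * m) = w (2 * n) →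
        (m : ℝ) > 0.495 * Real.sqrt (c : ℝ) / Real.sqrt (b : ℝ)) ∧
    ((∃ ε : ℤ, (ε = 1 ∨ ε = -1) ∧ z₀ = ε * t ∧ z₁ = ε * s) ∧ x₀ = r ∧ y₁ = r →
      ∀ m n : ℕ, 2 < n → v (2 * m + 1) = w (2 * n + 1) →
        (m : ℝ) ^ 2 > 0.0625 * Real.sqrt (c : ℝ) / (b : ℝ)) := by
  have h7 : 7 * a ≤ b := by
    have : 7 ≤ k := by rcases hk with rfl | rfl | rfl | rfl | rfl | rfl <;> norm_num
    exact hb ▸ mul_le_mul_of_nonneg_right this ha.le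
  have hab : a * b + 4 = r ^ 2 := by rw [← hr2, hb]; ring
  have he : 5 ≤ a + b - 2 * r := five_le_add_sub_two_mul ha h7 (by linarith) hab
  obtain ⟨ρ, he', hρ, hcρ⟩ : ∃ ρ, 5 ≤ a + b + 2 * ρ ∧ ρ ≤ b ∧ c = cThree a b ρ := by
    rcases hc with hc | hc
    · exact ⟨r, by linarith, by linarith, hc⟩
    · exact ⟨-r, by linarith, by linarith, by rw [hc, cThree]; ring⟩
  have hlo : 5 * a ^ 2 * b ^ 2 ≤ c := hcρ ▸ five_mul_sq_le_cThree ha (by linarith) he'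
  have hhi : c ≤ a ^ 4 * b ^ 4 := hcρ ▸ cThree_le ha (by linarith) (by linarith) hρ
  have hbc : b < c := by nlinarith [le_mul_of_one_le_left (by linarith : 0 ≤ b) ha]
  have h : IsDFourTriple a b c r s t :=
    ⟨ha, by linarith, hbc, hr, hs, ht, hab, hs2, ht2⟩
  obtain ⟨heven, hodd⟩ := lower_bound_m_c3_general h (by linarith) hlo hhi
    ⟨hv0, hv1, hvrec⟩ ⟨hw0, hw1, hwrec⟩
  exact ⟨fun hz m n hn => heven hz m n (by lia), fun hz m n hn => hodd hz m n (by lia)⟩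
end
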